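/- arXiv:2104.05236 — 3 statements merged into one kernel-verified Lean document; each statement's English description precedes it below -/
import Mathlib

section
/- Let Λ = diag(λ₁,…,λ_s) and Λ_A = diag(α₁,…,α_s) be real diagonal s×s matrices with λ₁ ≥ λ₂ ≥ … ≥ λ_s ≥ 0 and 1 ≥ α₁ ≥ α₂ ≥ … ≥ α_s ≥ 0, and let Q be a unitary s×s complex matrix. Then det(I_s + Λ − Q Λ_A Qᴴ) ≤ ∏_{i=1}^{s} (1 + λ_i − α_i), and consequently det(I_s − Q Λ_A Qᴴ (I_s + Λ)⁻¹) ≤ ∏_{i=1}^{s} (1 − α_i/(1+λ_i)). -/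
open Matrix ComplexOrder

/-- The quadratic form of `U * diagonal x * Uᴴ` at `U *ᵥ p`. -/
theorem star_dotProduct_unitary_conj_diagonal {n : Type*} [Fintype n] [DecidableEq n]
    {U : Matrix n n ℂ} (hU : U ∈ unitaryGroup n ℂ) (x : n → ℝ) (p : n → ℂ) :
    star (U *ᵥ p) ⬝ᵥ ((U * diagonal (fun j => (x j : ℂ)) * Uᴴ) *ᵥ (U *ᵥ p)) =
      ((∑ j, x j * ‖p j‖ ^ 2 : ℝ) : ℂ) := by
  have hU' : Uᴴ * U = 1 := by
    simpa [star_eq_conjTranspose] using mem_unitaryGroup_iff'.1 hU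
  rw [star_mulVec, ← dotProduct_mulVec, mulVec_mulVec, mulVec_mulVec]
  have : Uᴴ * (U * diagonal (fun j => (x j : ℂ)) * Uᴴ) * U = diagonal (fun j => (x j : ℂ)) := by
    rw [Matrix.mul_assoc, Matrix.mul_assoc _ Uᴴ U, hU', Matrix.mul_one, ← Matrix.mul_assoc, hU',
      Matrix.one_mul]
  rw [this, dotProduct]
  push_cast
  refine Finset.sum_congr rfl fun j _ => ?_
  rw [mulVec_diagonal, Pi.star_apply, RCLike.star_def, ← Complex.conj_mul']
  ring

/-- A unitary matrix preserves the sum of the squared absolute values of the coordinates. -/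
theorem sum_norm_sq_unitary_mulVec {n : Type*} [Fintype n] [DecidableEq n]
    {U : Matrix n n ℂ} (hU : U ∈ unitaryGroup n ℂ) (p : n → ℂ) :
    ∑ j, ‖(U *ᵥ p) j‖ ^ 2 = ∑ j, ‖p j‖ ^ 2 := by
  have hU' : U * Uᴴ = 1 := by
    simpa [star_eq_conjTranspose] using mem_unitaryGroup_iff.1 hU
  have h1 := star_dotProduct_unitary_conj_diagonal hU (fun _ => 1) p
  have h2 := star_dotProduct_unitary_conj_diagonal (one_mem (unitaryGroup n ℂ)) (fun _ => 1)
    (U *ᵥ p)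
  simp only [Complex.ofReal_one, diagonal_one, Matrix.mul_one, hU', one_mul,
    conjTranspose_one, one_mulVec] at h1 h2
  exact_mod_cast h2.symm.trans h1

/-- **Weyl monotonicity**: decreasingly ordered eigenvalues are monotone in the Loewner order. -/
theorem le_of_posSemidef_sub_unitary_conj_diagonal {s : ℕ}
    {U V : Matrix (Fin s) (Fin s) ℂ} (hU : U ∈ unitaryGroup (Fin s) ℂ)
    (hV : V ∈ unitaryGroup (Fin s) ℂ) {x z : Fin s → ℝ} (hx : Antitone x) (hz : Antitone z)
    (h : (V * diagonal (fun j => (z j : ℂ)) * Vᴴ -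
      U * diagonal (fun j => (x j : ℂ)) * Uᴴ).PosSemidef) (i : Fin s) : x i ≤ z i := by
  have hV' : V * Vᴴ = 1 := by
    simpa [star_eq_conjTranspose] using mem_unitaryGroup_iff.1 hV
  let W : Matrix {j // j ≠ i} (Fin s) ℂ :=
    of fun j k => if j.1 < i then (Vᴴ * U) j k else (1 : Matrix (Fin s) (Fin s) ℂ) j k
  obtain ⟨p, hp, hp0⟩ : ∃ p ∈ LinearMap.ker W.mulVecLin, p ≠ 0 := by
    refine Submodule.exists_mem_ne_zero_of_ne_bot (LinearMap.ker_ne_bot_of_finrank_lt ?_)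
    rw [Module.finrank_fintype_fun_eq_card, Module.finrank_fintype_fun_eq_card]
    exact Fintype.card_subtype_lt (x := i) (by simp)
  rw [LinearMap.mem_ker, mulVecLin_apply] at hp
  have hp1 : ∀ j, i < j → p j = 0 := fun j hj => by
    have := congrFun hp ⟨j, hj.ne'⟩
    simpa [W, mulVec, dotProduct, not_lt.2 hj.le, one_apply] using this
  set q := Vᴴ *ᵥ (U *ᵥ p) with hq
  have hq1 : ∀ j, j < i → q j = 0 := fun j hj => by
    have := congrFun hp ⟨j, hj.ne⟩
    rw [hq, mulVec_mulVec]
    simpa [W, mulVec, dotProduct, hj] using this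
  have hVq : V *ᵥ q = U *ᵥ p := by rw [hq, mulVec_mulVec, hV', one_mulVec]
  have hN : ∑ j, ‖q j‖ ^ 2 = ∑ j, ‖p j‖ ^ 2 := by
    rw [← sum_norm_sq_unitary_mulVec hV, hVq, sum_norm_sq_unitary_mulVec hU]
  have hpos : 0 < ∑ j, ‖p j‖ ^ 2 := by
    obtain ⟨j, hj⟩ := Function.ne_iff.1 hp0
    exact Finset.sum_pos' (fun _ _ => by positivity)
      ⟨j, Finset.mem_univ _, pow_pos (norm_pos_iff.2 hj) 2⟩
  have key := h.dotProduct_mulVec_nonneg (U *ᵥ p)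
  rw [sub_mulVec, dotProduct_sub, star_dotProduct_unitary_conj_diagonal hU, ← hVq,
    star_dotProduct_unitary_conj_diagonal hV, sub_nonneg, Complex.real_le_real] at key
  have h1 : x i * ∑ j, ‖p j‖ ^ 2 ≤ ∑ j, x j * ‖p j‖ ^ 2 := by
    rw [Finset.mul_sum]
    refine Finset.sum_le_sum fun j _ => ?_
    rcases le_or_gt j i with hj | hj
    · exact mul_le_mul_of_nonneg_right (hx hj) (by positivity)
    · simp [hp1 j hj]
  have h2 : ∑ j, z j * ‖q j‖ ^ 2 ≤ z i * ∑ j, ‖q j‖ ^ 2 := by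
    rw [Finset.mul_sum]
    refine Finset.sum_le_sum fun j _ => ?_
    rcases le_or_gt i j with hj | hj
    · exact mul_le_mul_of_nonneg_right (hz hj) (by positivity)
    · simp [hq1 j hj]
  rw [hN] at h2
  exact le_of_mul_le_mul_right (h1.trans (key.trans h2)) hpos

theorem posSemidef_unitary_conj_diagonal {n : Type*} [Fintype n] [DecidableEq n]
    (U : Matrix n n ℂ) {x : n → ℝ} (hx : ∀ i, 0 ≤ x i) :
    (U * diagonal (fun j => (x j : ℂ)) * Uᴴ).PosSemidef :=
  (posSemidef_diagonal_iff.2 fun i => by exact_mod_cast hx i).mul_mul_conjTranspose_same U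

theorem trace_unitary_conj_diagonal {n : Type*} [Fintype n] [DecidableEq n]
    {U : Matrix n n ℂ} (hU : U ∈ unitaryGroup n ℂ) (x : n → ℝ) :
    (U * diagonal (fun j => (x j : ℂ)) * Uᴴ).trace = ((∑ j, x j : ℝ) : ℂ) := by
  have hU' : Uᴴ * U = 1 := by
    simpa [star_eq_conjTranspose] using mem_unitaryGroup_iff'.1 hU
  rw [trace_mul_comm, ← Matrix.mul_assoc, hU', Matrix.one_mul, trace_diagonal]
  push_cast
  rfl

theorem Matrix.IsHermitian.eq_unitary_conj_diagonal {n : Type*} [Fintype n] [DecidableEq n]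
    {A : Matrix n n ℂ} (hA : A.IsHermitian) :
    A = hA.eigenvectorUnitary.1 * diagonal (fun j => (hA.eigenvalues j : ℂ)) *
      (hA.eigenvectorUnitary.1)ᴴ := by
  conv_lhs => rw [hA.spectral_theorem, Unitary.conjStarAlgAut_apply]
  rfl

/-- Spectral theorem with decreasingly ordered eigenvalues. -/
theorem Matrix.IsHermitian.exists_antitone_unitary_conj_diagonal {s : ℕ}
    {A : Matrix (Fin s) (Fin s) ℂ} (hA : A.IsHermitian) :
    ∃ U ∈ unitaryGroup (Fin s) ℂ, ∃ x : Fin s → ℝ, Antitone x ∧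
      A = U * diagonal (fun j => (x j : ℂ)) * Uᴴ := by
  set σ := Tuple.sort (-hA.eigenvalues)
  refine ⟨(hA.eigenvectorUnitary.1).submatrix id σ, ?_, hA.eigenvalues ∘ σ, ?_, ?_⟩
  · rw [mem_unitaryGroup_iff, star_eq_conjTranspose, conjTranspose_submatrix,
      submatrix_mul_equiv, ← star_eq_conjTranspose,
      mem_unitaryGroup_iff.1 hA.eigenvectorUnitary.2, submatrix_one _ Function.injective_id]
  · intro i j hij
    simpa using Tuple.monotone_sort (-hA.eigenvalues) hij
  · have : diagonal (fun j => (((hA.eigenvalues ∘ σ) j : ℝ) : ℂ)) =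
        (diagonal fun j => (hA.eigenvalues j : ℂ)).submatrix σ σ := by
      rw [submatrix_diagonal_equiv]; rfl
    rw [this, conjTranspose_submatrix, submatrix_mul_equiv, submatrix_mul_equiv, submatrix_id_id]
    exact hA.eq_unitary_conj_diagonal

/-- The eigenvalues of a Hermitian sum majorize the sums of the oppositely ordered eigenvalues
of the summands. -/
theorem sum_max_sub_le_sum_max_sub_eigenvalues {s : ℕ} {a b : Fin s → ℝ} (ha : Antitone a)
    (hb : Monotone b) {Q : Matrix (Fin s) (Fin s) ℂ} (hQ : Q ∈ unitaryGroup (Fin s) ℂ)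
    (hH : (diagonal (fun i => (a i : ℂ)) +
      Q * diagonal (fun i => (b i : ℂ)) * Qᴴ).IsHermitian) (t : ℝ) :
    ∑ i, max (t - (a i + b i)) 0 ≤ ∑ i, max (t - hH.eigenvalues i) 0 := by
  set V := hH.eigenvectorUnitary.1
  have hV : V ∈ unitaryGroup (Fin s) ℂ := hH.eigenvectorUnitary.2
  have hspec := hH.eq_unitary_conj_diagonal
  set η := hH.eigenvalues
  have scalar : ∀ {U : Matrix (Fin s) (Fin s) ℂ}, U ∈ unitaryGroup (Fin s) ℂ → ∀ x : Fin s → ℝ,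
      U * diagonal (fun i => ((t - x i : ℝ) : ℂ)) * Uᴴ =
        (t : ℂ) • 1 - U * diagonal (fun i => (x i : ℂ)) * Uᴴ := fun {U} hU x => by
    have hU' : U * Uᴴ = 1 := by
      simpa [star_eq_conjTranspose] using mem_unitaryGroup_iff.1 hU
    have : diagonal (fun i => ((t - x i : ℝ) : ℂ)) =
        (t : ℂ) • (1 : Matrix (Fin s) (Fin s) ℂ) - diagonal (fun i => (x i : ℂ)) := by
      rw [smul_one_eq_diagonal, diagonal_sub]
      simp
    rw [this, Matrix.mul_sub, Matrix.sub_mul, Matrix.mul_smul, Matrix.mul_one, Matrix.smul_mul, hU']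
  set Y := V * diagonal (fun i => ((max (t - η i) 0 : ℝ) : ℂ)) * Vᴴ with hYdef
  have hY : Y.PosSemidef := posSemidef_unitary_conj_diagonal V fun i => le_max_right _ _
  have hA : (diagonal (fun i => (a i : ℂ))).IsHermitian := by
    simp [IsHermitian, diagonal_conjTranspose, Pi.star_def]
  obtain ⟨U, hU, μ, hμ, hZ⟩ := (hA.add hY.isHermitian).exists_antitone_unitary_conj_diagonal
  have h1 : ∀ i, a i ≤ μ i := le_of_posSemidef_sub_unitary_conj_diagonal
    (one_mem (unitaryGroup (Fin s) ℂ)) hU ha hμ (by rw [← hZ]; simpa using hY)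
  have h2 : ∀ i, t - b i ≤ μ i := by
    refine le_of_posSemidef_sub_unitary_conj_diagonal hQ hU
      (fun i j hij => sub_le_sub_left (hb hij) t) hμ ?_
    rw [← hZ, scalar hQ]
    have : diagonal (fun i => (a i : ℂ)) + Y -
        ((t : ℂ) • 1 - Q * diagonal (fun i => (b i : ℂ)) * Qᴴ) =
        V * diagonal (fun i => ((max (t - η i) 0 - (t - η i) : ℝ) : ℂ)) * Vᴴ := by
      have e : diagonal (fun i => ((max (t - η i) 0 - (t - η i) : ℝ) : ℂ)) =
          diagonal (fun i => ((max (t - η i) 0 : ℝ) : ℂ)) -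
            diagonal (fun i => ((t - η i : ℝ) : ℂ)) := by
        rw [diagonal_sub]
        simp
      rw [e, Matrix.mul_sub, Matrix.sub_mul, scalar hV, ← hspec, hYdef]
      abel
    rw [this]
    exact posSemidef_unitary_conj_diagonal V fun i => sub_nonneg.2 (le_max_left _ _)
  have htr := congrArg trace hZ
  rw [trace_add, hYdef, trace_unitary_conj_diagonal hU, trace_unitary_conj_diagonal hV,
    trace_diagonal] at htr
  have htr' : ∑ i, a i + ∑ i, max (t - η i) 0 = ∑ i, μ i := by exact_mod_cast htr
  calc ∑ i, max (t - (a i + b i)) 0 ≤ ∑ i, (μ i - a i) :=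
        Finset.sum_le_sum fun i _ => max_le (by linarith [h2 i]) (by linarith [h1 i])
    _ = ∑ i, max (t - η i) 0 := by rw [Finset.sum_sub_distrib]; linarith

theorem integral_max_sub_div_sq {m M x : ℝ} (hm : 0 < m) (hmx : m ≤ x) (hxM : x ≤ M) :
    ∫ t in m..M, max (t - x) 0 / t ^ 2 = Real.log M - Real.log x + x / M - 1 := by
  have hx : 0 < x := hm.trans_le hmx
  have hM : 0 < M := hx.trans_le hxM
  have hint : ∀ {u v : ℝ}, 0 < u → u ≤ v →
      IntervalIntegrable (fun t => max (t - x) 0 / t ^ 2) MeasureTheory.volume u v :=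
    fun {u v} hu huv => ContinuousOn.intervalIntegrable <| by
      rw [Set.uIcc_of_le huv]
      exact ContinuousOn.div (by fun_prop) (by fun_prop)
        fun t ht => pow_ne_zero 2 (hu.trans_le ht.1).ne'
  rw [← intervalIntegral.integral_add_adjacent_intervals (hint hm hmx) (hint hx hxM)]
  have h1 : ∫ t in m..x, max (t - x) 0 / t ^ 2 = 0 := by
    rw [intervalIntegral.integral_congr (g := fun _ => 0), intervalIntegral.integral_zero]
    intro t ht
    rw [Set.uIcc_of_le hmx] at ht
    simp [max_eq_right (sub_nonpos.2 ht.2)]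
  have h2 : ∫ t in x..M, max (t - x) 0 / t ^ 2 = (Real.log M + x / M) - (Real.log x + x / x) := by
    refine intervalIntegral.integral_eq_sub_of_hasDerivAt (f := fun t => Real.log t + x / t)
      (fun t ht => ?_) (hint hx hxM)
    rw [Set.uIcc_of_le hxM] at ht
    have ht0 : t ≠ 0 := (hx.trans_le ht.1).ne'
    rw [max_eq_left (sub_nonneg.2 ht.1)]
    refine ((Real.hasDerivAt_log ht0).add
      ((hasDerivAt_const t x).div (hasDerivAt_id t) ht0)).congr_deriv ?_
    rw [id]
    field_simp
    ring
  rw [h1, h2, div_self hx.ne']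
  ring

/-- Karamata's inequality for the logarithm, with majorization expressed by positive parts. -/
theorem prod_le_prod_of_sum_max_sub_le {n : Type*} [Fintype n] {c η : n → ℝ}
    (hc : ∀ i, 0 ≤ c i) (hη : ∀ i, 0 ≤ η i) (hsum : ∑ i, c i = ∑ i, η i)
    (h : ∀ t, ∑ i, max (t - c i) 0 ≤ ∑ i, max (t - η i) 0) : ∏ i, η i ≤ ∏ i, c i := by
  rcases isEmpty_or_nonempty n with _ | _
  · simp
  by_cases hη0 : ∃ i, η i = 0
  · obtain ⟨i, hi⟩ := hη0
    rw [Finset.prod_eq_zero (Finset.mem_univ i) hi]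
    exact Finset.prod_nonneg fun i _ => hc i
  push Not at hη0
  have hηpos : ∀ i, 0 < η i := fun i => (hη i).lt_of_ne' (hη0 i)
  obtain ⟨k, hk⟩ := Finite.exists_min η
  obtain ⟨l, hl⟩ := Finite.exists_min c
  have hcl : 0 < c l := by
    have h1 := h (η k)
    rw [Finset.sum_eq_zero (f := fun i => max (η k - η i) 0)
      fun i _ => max_eq_right (sub_nonpos.2 (hk i))] at h1
    have h2 := Finset.single_le_sum (f := fun i => max (η k - c i) 0)
      (fun i _ => le_max_right _ _) (Finset.mem_univ l)
    have h3 := le_max_left (η k - c l) 0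
    have := hηpos k
    linarith
  have hcpos : ∀ i, 0 < c i := fun i => hcl.trans_le (hl i)
  set m := min (η k) (c l)
  set M := ∑ i, η i
  have hm : 0 < m := lt_min (hηpos k) hcl
  have hmη : ∀ i, m ≤ η i := fun i => (min_le_left _ _).trans (hk i)
  have hmc : ∀ i, m ≤ c i := fun i => (min_le_right _ _).trans (hl i)
  have hηM : ∀ i, η i ≤ M := fun i =>
    Finset.single_le_sum (fun i _ => hη i) (Finset.mem_univ i)
  have hcM : ∀ i, c i ≤ M := fun i =>
    (Finset.single_le_sum (fun i _ => hc i) (Finset.mem_univ i)).trans_eq hsum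
  have hmM : m ≤ M := (hmη k).trans (hηM k)
  have hint : ∀ x : ℝ,
      IntervalIntegrable (fun t => max (t - x) 0 / t ^ 2) MeasureTheory.volume m M :=
    fun x => ContinuousOn.intervalIntegrable <| by
      rw [Set.uIcc_of_le hmM]
      exact ContinuousOn.div (by fun_prop) (by fun_prop)
        fun t ht => pow_ne_zero 2 (hm.trans_le ht.1).ne'
  have hmono : ∑ i, ∫ t in m..M, max (t - c i) 0 / t ^ 2 ≤
      ∑ i, ∫ t in m..M, max (t - η i) 0 / t ^ 2 := by
    rw [← intervalIntegral.integral_finsetSum fun i _ => hint (c i),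
      ← intervalIntegral.integral_finsetSum fun i _ => hint (η i)]
    refine intervalIntegral.integral_mono_on hmM
      (by simpa only [Finset.sum_fn] using
        IntervalIntegrable.sum Finset.univ fun i _ => hint (c i))
      (by simpa only [Finset.sum_fn] using
        IntervalIntegrable.sum Finset.univ fun i _ => hint (η i)) fun t _ => ?_
    rw [← Finset.sum_div, ← Finset.sum_div]
    exact div_le_div_of_nonneg_right (h t) (sq_nonneg t)
  simp only [fun i => integral_max_sub_div_sq hm (hmc i) (hcM i),
    fun i => integral_max_sub_div_sq hm (hmη i) (hηM i), Finset.sum_sub_distrib,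
    Finset.sum_add_distrib, ← Finset.sum_div, hsum] at hmono
  rw [← Real.log_le_log_iff (Finset.prod_pos fun i _ => hηpos i)
    (Finset.prod_pos fun i _ => hcpos i), Real.log_prod fun i _ => (hηpos i).ne',
    Real.log_prod fun i _ => (hcpos i).ne']
  linarith

theorem det_diagonal_add_unitary_conj_diagonal_le {s : ℕ} {a b : Fin s → ℝ} (ha : Antitone a)
    (hb : Monotone b) (ha0 : ∀ i, 0 ≤ a i) (hb0 : ∀ i, 0 ≤ b i)
    {Q : Matrix (Fin s) (Fin s) ℂ} (hQ : Q ∈ unitaryGroup (Fin s) ℂ) :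
    det (diagonal (fun i => (a i : ℂ)) + Q * diagonal (fun i => (b i : ℂ)) * Qᴴ)
      ≤ ∏ i, ((a i + b i : ℝ) : ℂ) := by
  have hpsd : (diagonal (fun i => (a i : ℂ)) +
      Q * diagonal (fun i => (b i : ℂ)) * Qᴴ).PosSemidef :=
    (posSemidef_diagonal_iff.2 fun i => by exact_mod_cast ha0 i).add
      (posSemidef_unitary_conj_diagonal Q hb0)
  have hH := hpsd.isHermitian
  have htr : _ = ∑ i, (hH.eigenvalues i : ℂ) := hH.trace_eq_sum_eigenvalues
  have hdet : _ = ∏ i, (hH.eigenvalues i : ℂ) := hH.det_eq_prod_eigenvalues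
  rw [trace_add, trace_unitary_conj_diagonal hQ, trace_diagonal] at htr
  rw [hdet]
  have := prod_le_prod_of_sum_max_sub_le (fun i => add_nonneg (ha0 i) (hb0 i))
    hpsd.eigenvalues_nonneg
    (by rw [Finset.sum_add_distrib]; exact_mod_cast htr)
    (sum_max_sub_le_sum_max_sub_eigenvalues ha hb hQ hH)
  exact_mod_cast this

theorem stmt_2 (s : ℕ) (lam alpha : Fin s → ℝ)
    (hlam_mono : Antitone lam) (hlam_nonneg : ∀ i, 0 ≤ lam i)
    (halpha_mono : Antitone alpha) (halpha_nonneg : ∀ i, 0 ≤ alpha i)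
    (halpha_le_one : ∀ i, alpha i ≤ 1)
    (Q : Matrix (Fin s) (Fin s) ℂ) (hQ : Q ∈ Matrix.unitaryGroup (Fin s) ℂ) :
    det (1 + diagonal (fun i => (lam i : ℂ)) - Q * diagonal (fun i => (alpha i : ℂ)) * Qᴴ)
      ≤ ∏ i, ((1 + lam i - alpha i : ℝ) : ℂ) ∧
    det (1 - Q * diagonal (fun i => (alpha i : ℂ)) * Qᴴ *
          (1 + diagonal (fun i => (lam i : ℂ)))⁻¹)
      ≤ ∏ i, ((1 - alpha i / (1 + lam i) : ℝ) : ℂ) := by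
  have hQ' : Q * Qᴴ = 1 := by
    simpa [star_eq_conjTranspose] using mem_unitaryGroup_iff.1 hQ
  have hfirst : det (1 + diagonal (fun i => (lam i : ℂ)) -
      Q * diagonal (fun i => (alpha i : ℂ)) * Qᴴ) ≤ ∏ i, ((1 + lam i - alpha i : ℝ) : ℂ) := by
    have key := det_diagonal_add_unitary_conj_diagonal_le hlam_mono
      (b := fun i => 1 - alpha i) (fun i j hij => sub_le_sub_left (halpha_mono hij) 1) hlam_nonneg
      (fun i => sub_nonneg.2 (halpha_le_one i)) hQ
    have e : diagonal (fun i => ((1 - alpha i : ℝ) : ℂ)) =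
        1 - diagonal (fun i => (alpha i : ℂ)) := by
      rw [← diagonal_one, diagonal_sub]
      simp
    rw [e, Matrix.mul_sub, Matrix.sub_mul, Matrix.mul_one, hQ'] at key
    convert key using 1
    · congr 1
      abel
    · exact Finset.prod_congr rfl fun i _ => by push_cast; ring
  refine ⟨hfirst, ?_⟩
  have hpos : ∀ i, 0 < 1 + lam i := fun i => by linarith [hlam_nonneg i]
  have hdet : det (1 + diagonal (fun i => (lam i : ℂ))) = ((∏ i, (1 + lam i) : ℝ) : ℂ) := by
    rw [← diagonal_one, diagonal_add, det_diagonal]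
    push_cast
    rfl
  have hprod : 0 < ∏ i, (1 + lam i) := Finset.prod_pos fun i _ => hpos i
  have hunit : IsUnit (det (1 + diagonal (fun i => (lam i : ℂ)))) := by
    rw [hdet, isUnit_iff_ne_zero]
    exact_mod_cast hprod.ne'
  have hfac : 1 - Q * diagonal (fun i => (alpha i : ℂ)) * Qᴴ *
      (1 + diagonal (fun i => (lam i : ℂ)))⁻¹ =
      (1 + diagonal (fun i => (lam i : ℂ)) - Q * diagonal (fun i => (alpha i : ℂ)) * Qᴴ) *
        (1 + diagonal (fun i => (lam i : ℂ)))⁻¹ := by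
    rw [Matrix.sub_mul, mul_nonsing_inv _ hunit]
  have hrhs : ∏ i, ((1 - alpha i / (1 + lam i) : ℝ) : ℂ) =
      (∏ i, ((1 + lam i - alpha i : ℝ) : ℂ)) * (((∏ i, (1 + lam i))⁻¹ : ℝ) : ℂ) := by
    rw [← Finset.prod_inv_distrib, Complex.ofReal_prod, ← Finset.prod_mul_distrib]
    refine Finset.prod_congr rfl fun i _ => ?_
    rw [← Complex.ofReal_mul]
    congr 1
    have := (hpos i).ne'
    field_simp
  rw [hfac, det_mul, det_nonsing_inv, Ring.inverse_eq_inv', hdet, hrhs, ← Complex.ofReal_inv]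
  exact mul_le_mul_of_nonneg_right hfirst (by exact_mod_cast (inv_pos.2 hprod).le)
end

section
/- Let A be a Hermitian positive semidefinite s×s complex matrix whose eigenvalues α₁ ≥ α₂ ≥ … ≥ α_s (in nonincreasing order) satisfy α₁ ≤ 1, let B be a Hermitian positive semidefinite u×u complex matrix, and let X be any u×s complex matrix with λ₁ ≥ λ₂ ≥ … ≥ λ_s the eigenvalues of Xᴴ B X in nonincreasing order. Then det[I_s − A (I_s + Xᴴ B X)⁻¹] ≤ ∏_{i=1}^{s} (1 − α_i/(1+λ_i)). -/
open Matrix ComplexOrder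

section ProductMajorization

/-- The layer-cake type representation of the logarithm by truncations `x ↦ min x c`. -/
theorem integral_min_div_sq {m x R : ℝ} (hm : 0 < m) (hmx : m ≤ x) (hxR : x ≤ R) :
    ∫ c in m..R, min x c / c ^ 2 = Real.log x - Real.log m + 1 - x / R := by
  have hx : 0 < x := hm.trans_le hmx
  have hcont : ∀ p q : ℝ, 0 < p → p ≤ q →
      IntervalIntegrable (fun c : ℝ => min x c / c ^ 2) MeasureTheory.volume p q := by
    intro p q hp hpq
    apply ContinuousOn.intervalIntegrable
    rw [Set.uIcc_of_le hpq]
    refine ContinuousOn.div (by fun_prop) (by fun_prop) fun c hc => ?_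
    have : 0 < c := hp.trans_le hc.1
    positivity
  have h₁ : ∫ c in m..x, min x c / c ^ 2 = Real.log x - Real.log m := by
    apply intervalIntegral.integral_eq_sub_of_hasDerivAt _ (hcont m x hm hmx)
    intro c hc
    rw [Set.uIcc_of_le hmx] at hc
    have hc0 : 0 < c := hm.trans_le hc.1
    refine (Real.hasDerivAt_log hc0.ne').congr_deriv ?_
    rw [min_eq_right hc.2]
    field_simp
  have h₂ : ∫ c in x..R, min x c / c ^ 2 = -x * R⁻¹ - -x * x⁻¹ := by
    apply intervalIntegral.integral_eq_sub_of_hasDerivAt (f := fun c => -x * c⁻¹) _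
      (hcont x R hx hxR)
    intro c hc
    rw [Set.uIcc_of_le hxR] at hc
    have hc0 : 0 < c := hx.trans_le hc.1
    refine ((hasDerivAt_inv hc0.ne').const_mul (-x)).congr_deriv ?_
    rw [min_eq_left hc.1]
    field_simp
  rw [← intervalIntegral.integral_add_adjacent_intervals (hcont m x hm hmx) (hcont x R hx hxR),
    h₁, h₂]
  have hR : 0 < R := hx.trans_le hxR
  field_simp
  ring

/-- If the truncated sums of `t` dominate those of `μ` and both have the same sum,
then `∏ μ ≤ ∏ t`. -/
theorem prod_le_prod_of_sum_min_le {ι : Type*} [Fintype ι] {μ t : ι → ℝ}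
    (hμ : ∀ i, 0 ≤ μ i) (ht : ∀ i, 0 ≤ t i) (hsum : ∑ i, μ i = ∑ i, t i)
    (h : ∀ c, ∑ i, min (μ i) c ≤ ∑ i, min (t i) c) : ∏ i, μ i ≤ ∏ i, t i := by
  by_cases hz : ∃ i, μ i = 0
  · obtain ⟨i, hi⟩ := hz
    rw [Finset.prod_eq_zero (Finset.mem_univ i) hi]
    exact Finset.prod_nonneg fun i _ => ht i
  push Not at hz
  have hμ' : ∀ i, 0 < μ i := fun i => (hμ i).lt_of_ne' (hz i)
  obtain ⟨m, hm, hmμ⟩ : ∃ m, 0 < m ∧ ∀ i, m ≤ μ i := by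
    obtain _ | _ := isEmpty_or_nonempty ι
    · exact ⟨1, one_pos, fun i => isEmptyElim i⟩
    · obtain ⟨i, hi⟩ := Finite.exists_min μ
      exact ⟨μ i, hμ' i, hi⟩
  have hmt : ∀ i, m ≤ t i := by
    have h₁ : ∑ i, min (t i) m = ∑ _i : ι, m := by
      refine le_antisymm (Finset.sum_le_sum fun i _ => min_le_right _ _) ?_
      calc ∑ _i : ι, m = ∑ i, min (μ i) m :=
            Finset.sum_congr rfl fun i _ => (min_eq_right (hmμ i)).symm
        _ ≤ _ := h m
    intro i
    have := (Finset.sum_eq_sum_iff_of_le (fun i _ => min_le_right (t i) m)).1 h₁ i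
      (Finset.mem_univ i)
    exact min_eq_right_iff.1 this
  have ht' : ∀ i, 0 < t i := fun i => hm.trans_le (hmt i)
  set R := m + ∑ i, μ i with hR
  have hle : ∀ f : ι → ℝ, (∀ i, 0 ≤ f i) → ∑ i, f i = ∑ i, μ i → ∀ i, f i ≤ R := by
    intro f hf hs i
    have := Finset.single_le_sum (fun j _ => hf j) (Finset.mem_univ i)
    linarith
  have hmR : m ≤ R := by
    have := Finset.sum_nonneg fun i (_ : i ∈ Finset.univ) => hμ i
    linarith
  have hint : ∀ x : ℝ, IntervalIntegrable (fun c : ℝ => min x c / c ^ 2)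
      MeasureTheory.volume m R := by
    intro x
    apply ContinuousOn.intervalIntegrable
    rw [Set.uIcc_of_le hmR]
    refine ContinuousOn.div (by fun_prop) (by fun_prop) fun c hc => ?_
    have : 0 < c := hm.trans_le hc.1
    positivity
  have key : ∑ i, ∫ c in m..R, min (μ i) c / c ^ 2 ≤ ∑ i, ∫ c in m..R, min (t i) c / c ^ 2 := by
    rw [← intervalIntegral.integral_finsetSum fun i _ => hint (μ i),
      ← intervalIntegral.integral_finsetSum fun i _ => hint (t i)]
    refine intervalIntegral.integral_mono_on hmR ?_ ?_ fun c _ => ?_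
    · simpa only [Finset.sum_fn] using IntervalIntegrable.sum Finset.univ fun i _ => hint (μ i)
    · simpa only [Finset.sum_fn] using IntervalIntegrable.sum Finset.univ fun i _ => hint (t i)
    · rw [← Finset.sum_div, ← Finset.sum_div]
      exact div_le_div_of_nonneg_right (h c) (sq_nonneg c)
  rw [Finset.sum_congr rfl fun i _ => integral_min_div_sq hm (hmμ i) (hle μ hμ rfl i),
    Finset.sum_congr rfl fun i _ => integral_min_div_sq hm (hmt i) (hle t ht hsum.symm i)] at key
  simp only [Finset.sum_sub_distrib, Finset.sum_add_distrib, ← Finset.sum_div, hsum] at key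
  rw [← Real.log_le_log_iff (Finset.prod_pos fun i _ => hμ' i) (Finset.prod_pos fun i _ => ht' i),
    Real.log_prod fun i _ => (hμ' i).ne', Real.log_prod fun i _ => (ht' i).ne']
  linarith

end ProductMajorization

section HermitianSpectrum

variable {n : ℕ}

/-- The matrix `U diag(a) Uᴴ`. -/
noncomputable def conjDiagonal (U : Matrix (Fin n) (Fin n) ℂ) (a : Fin n → ℝ) :
    Matrix (Fin n) (Fin n) ℂ :=
  U * diagonal (fun i => (a i : ℂ)) * Uᴴ

theorem conjDiagonal_sub (U : Matrix (Fin n) (Fin n) ℂ) (a b : Fin n → ℝ) :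
    conjDiagonal U (a - b) = conjDiagonal U a - conjDiagonal U b := by
  simp only [conjDiagonal, ← sub_mul, ← mul_sub, diagonal_sub, Pi.sub_apply, Complex.ofReal_sub]

theorem conjDiagonal_const {U : Matrix (Fin n) (Fin n) ℂ} (hU : U * Uᴴ = 1) (c : ℝ) :
    conjDiagonal U (fun _ => c) = (c : ℂ) • 1 := by
  rw [conjDiagonal, ← smul_one_eq_diagonal, mul_smul_comm, mul_one, smul_mul_assoc, hU]

theorem trace_conjDiagonal {U : Matrix (Fin n) (Fin n) ℂ} (hU : U * Uᴴ = 1) (a : Fin n → ℝ) :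
    (conjDiagonal U a).trace = ((∑ i, a i : ℝ) : ℂ) := by
  rw [conjDiagonal, trace_mul_cycle, mul_eq_one_comm.1 hU, one_mul, trace_diagonal]
  push_cast
  rfl

theorem det_conjDiagonal {U : Matrix (Fin n) (Fin n) ℂ} (hU : U * Uᴴ = 1) (a : Fin n → ℝ) :
    (conjDiagonal U a).det = ((∏ i, a i : ℝ) : ℂ) := by
  rw [conjDiagonal, det_mul_right_comm, hU, one_mul, det_diagonal]
  push_cast
  rfl

theorem posSemidef_conjDiagonal (U : Matrix (Fin n) (Fin n) ℂ) {a : Fin n → ℝ}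
    (ha : ∀ i, 0 ≤ a i) : (conjDiagonal U a).PosSemidef :=
  (PosSemidef.diagonal fun i => by simpa using ha i).mul_mul_conjTranspose_same U

theorem star_dotProduct_conjDiagonal_mulVec (U : Matrix (Fin n) (Fin n) ℂ) (a : Fin n → ℝ)
    (v : Fin n → ℂ) :
    star v ⬝ᵥ (conjDiagonal U a *ᵥ v) = ((∑ i, a i * ‖(Uᴴ *ᵥ v) i‖ ^ 2 : ℝ) : ℂ) := by
  have h : star v ᵥ* U = star (Uᴴ *ᵥ v) := by rw [star_mulVec, conjTranspose_conjTranspose]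
  rw [conjDiagonal, mul_assoc, ← mulVec_mulVec, dotProduct_mulVec, h, ← mulVec_mulVec]
  simp only [dotProduct, mulVec_diagonal, Pi.star_apply]
  push_cast
  refine Finset.sum_congr rfl fun i _ => ?_
  rw [← Complex.conj_mul', starRingEnd_apply]
  ring

/-- A Hermitian matrix is diagonalized by a unitary matrix, with its eigenvalues listed in any
prescribed order. -/
theorem Matrix.IsHermitian.exists_eq_conjDiagonal {A : Matrix (Fin n) (Fin n) ℂ}
    (hA : A.IsHermitian) (σ : Equiv.Perm (Fin n)) :
    ∃ U : Matrix (Fin n) (Fin n) ℂ, U * Uᴴ = 1 ∧ A = conjDiagonal U (hA.eigenvalues ∘ σ) := by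
  set W : Matrix (Fin n) (Fin n) ℂ := (hA.eigenvectorUnitary : Matrix (Fin n) (Fin n) ℂ) with hW
  have hWW : W * Wᴴ = 1 := Unitary.coe_mul_star_self hA.eigenvectorUnitary
  refine ⟨W.submatrix id σ, ?_, ?_⟩
  · rw [conjTranspose_submatrix, submatrix_mul_equiv, hWW, submatrix_id_id]
  · have hd : diagonal (fun i => ((hA.eigenvalues ∘ σ) i : ℂ)) =
        (diagonal (fun i => (hA.eigenvalues i : ℂ))).submatrix σ σ := by
      rw [submatrix_diagonal_equiv]
      rfl
    rw [conjDiagonal, hd, conjTranspose_submatrix, submatrix_mul_equiv, submatrix_mul_equiv,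
      submatrix_id_id]
    conv_lhs => rw [hA.spectral_theorem]
    rfl

theorem Matrix.IsHermitian.exists_antitone_conjDiagonal {A : Matrix (Fin n) (Fin n) ℂ}
    (hA : A.IsHermitian) :
    ∃ (U : Matrix (Fin n) (Fin n) ℂ) (a : Fin n → ℝ),
      U * Uᴴ = 1 ∧ Antitone a ∧ A = conjDiagonal U a := by
  obtain ⟨U, hU, h⟩ := hA.exists_eq_conjDiagonal (Tuple.sort (-hA.eigenvalues))
  refine ⟨U, _, hU, fun i j hij => ?_, h⟩
  simpa using Tuple.monotone_sort (-hA.eigenvalues) hij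

/-- Weyl's monotonicity principle: ordered eigenvalues are monotone for the Loewner order. -/
theorem le_of_posSemidef_conjDiagonal_sub {U V : Matrix (Fin n) (Fin n) ℂ} {a b : Fin n → ℝ}
    (hU : U * Uᴴ = 1) (hV : V * Vᴴ = 1) (ha : Antitone a) (hb : Antitone b)
    (h : (conjDiagonal V b - conjDiagonal U a).PosSemidef) (i : Fin n) : a i ≤ b i := by
  let L : Matrix {j // j ≠ i} (Fin n) ℂ := of fun j => if j.1 < i then Vᴴ j else Uᴴ j
  have hdim : Module.finrank ℂ ({j // j ≠ i} → ℂ) < Module.finrank ℂ (Fin n → ℂ) := by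
    rw [Module.finrank_fintype_fun_eq_card, Module.finrank_fintype_fun_eq_card]
    exact Fintype.card_subtype_lt (x := i) (by simp)
  obtain ⟨v, hv, hv0⟩ := (Submodule.ne_bot_iff _).1 (LinearMap.ker_ne_bot_of_finrank_lt
    (f := L.mulVecLin) hdim)
  have hLv : ∀ j (hj : j ≠ i), (L *ᵥ v) ⟨j, hj⟩ = 0 := fun j hj => congrFun hv ⟨j, hj⟩
  have hVv : ∀ j, j < i → (Vᴴ *ᵥ v) j = 0 := by
    intro j hj
    have := hLv j hj.ne
    simpa [L, mulVec, hj] using this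
  have hUv : ∀ j, i < j → (Uᴴ *ᵥ v) j = 0 := by
    intro j hj
    have := hLv j hj.ne'
    simpa [L, mulVec, hj.not_gt] using this
  have hnorm : ∀ W : Matrix (Fin n) (Fin n) ℂ, W * Wᴴ = 1 →
      star v ⬝ᵥ v = ((∑ j, ‖(Wᴴ *ᵥ v) j‖ ^ 2 : ℝ) : ℂ) := by
    intro W hW
    have := star_dotProduct_conjDiagonal_mulVec W (fun _ => 1) v
    rw [conjDiagonal_const hW] at this
    simpa using this
  have hpos : 0 < ∑ j, ‖(Uᴴ *ᵥ v) j‖ ^ 2 := by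
    have := dotProduct_star_self_pos_iff.2 hv0
    rw [hnorm U hU] at this
    exact_mod_cast this
  have hUV : ∑ j, ‖(Uᴴ *ᵥ v) j‖ ^ 2 = ∑ j, ‖(Vᴴ *ᵥ v) j‖ ^ 2 := by
    exact_mod_cast (hnorm U hU).symm.trans (hnorm V hV)
  have hquad : ∑ j, a j * ‖(Uᴴ *ᵥ v) j‖ ^ 2 ≤ ∑ j, b j * ‖(Vᴴ *ᵥ v) j‖ ^ 2 := by
    have := h.dotProduct_mulVec_nonneg v
    rw [sub_mulVec, dotProduct_sub, star_dotProduct_conjDiagonal_mulVec,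
      star_dotProduct_conjDiagonal_mulVec, sub_nonneg] at this
    exact_mod_cast this
  have hlow : a i * ∑ j, ‖(Uᴴ *ᵥ v) j‖ ^ 2 ≤ ∑ j, a j * ‖(Uᴴ *ᵥ v) j‖ ^ 2 := by
    rw [Finset.mul_sum]
    refine Finset.sum_le_sum fun j _ => ?_
    obtain hj | hj := le_or_gt j i
    · exact mul_le_mul_of_nonneg_right (ha hj) (sq_nonneg _)
    · simp [hUv j hj]
  have hup : ∑ j, b j * ‖(Vᴴ *ᵥ v) j‖ ^ 2 ≤ b i * ∑ j, ‖(Vᴴ *ᵥ v) j‖ ^ 2 := by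
    rw [Finset.mul_sum]
    refine Finset.sum_le_sum fun j _ => ?_
    obtain hj | hj := le_or_gt i j
    · exact mul_le_mul_of_nonneg_right (hb hj) (sq_nonneg _)
    · simp [hVv j hj]
  rw [← hUV] at hup
  exact le_of_mul_le_mul_right (hlow.trans (hquad.trans hup)) hpos

/-- A convex-function form of Lidskii's majorization: the eigenvalues `μ` of the difference
of two Hermitian matrices majorize the difference `d - a` of their ordered eigenvalues. -/
theorem sum_min_le_sum_min_sub {U V W : Matrix (Fin n) (Fin n) ℂ} {a d μ : Fin n → ℝ}
    (hU : U * Uᴴ = 1) (hV : V * Vᴴ = 1) (hW : W * Wᴴ = 1) (ha : Antitone a) (hd : Antitone d)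
    (h : conjDiagonal W μ = conjDiagonal V d - conjDiagonal U a)
    (hsum : ∑ i, μ i = ∑ i, (d i - a i)) (c : ℝ) :
    ∑ i, min (μ i) c ≤ ∑ i, min (d i - a i) c := by
  set p : Fin n → ℝ := fun i => μ i - min (μ i) c with hp
  have hP := posSemidef_conjDiagonal W (a := p) fun i => sub_nonneg.2 (min_le_left _ _)
  have hE : (conjDiagonal U a + conjDiagonal W p).IsHermitian := by
    refine IsHermitian.add ?_ hP.1
    simp [IsHermitian, conjDiagonal, mul_assoc, diagonal_conjTranspose, Pi.star_def]
  obtain ⟨T, e, hT, he, hTe⟩ := hE.exists_antitone_conjDiagonal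
  have h₁ : ∀ i, a i ≤ e i := by
    refine le_of_posSemidef_conjDiagonal_sub hU hT ha he ?_
    rwa [← hTe, add_sub_cancel_left]
  have h₂ : ∀ i, d i - c ≤ e i := by
    refine le_of_posSemidef_conjDiagonal_sub (a := d - fun _ => c) hV hT
      (fun i j hij => sub_le_sub_right (hd hij) c) he ?_
    have : conjDiagonal T e - conjDiagonal V (d - fun _ => c) =
        conjDiagonal W ((fun _ => c) - (μ - p)) := by
      rw [← hTe, conjDiagonal_sub, conjDiagonal_sub, conjDiagonal_sub, conjDiagonal_const hV,
        conjDiagonal_const hW, h]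
      abel
    rw [this]
    exact posSemidef_conjDiagonal W fun i => by simp [hp]
  have htr : ∑ i, e i = ∑ i, a i + ∑ i, p i := by
    have := congrArg trace hTe
    rw [trace_add, trace_conjDiagonal hU, trace_conjDiagonal hW, trace_conjDiagonal hT] at this
    exact_mod_cast this.symm
  have h₃ : ∑ i, (d i - e i) ≤ ∑ i, min (d i - a i) c :=
    Finset.sum_le_sum fun i _ => le_min (by linarith [h₁ i]) (by linarith [h₂ i])
  simp only [hp, Finset.sum_sub_distrib] at h₃ htr hsum
  linarith

/-- Fiedler's upper bound for the determinant of a difference. -/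
theorem prod_le_prod_sub {U V W : Matrix (Fin n) (Fin n) ℂ} {a d μ : Fin n → ℝ}
    (hU : U * Uᴴ = 1) (hV : V * Vᴴ = 1) (hW : W * Wᴴ = 1) (ha : Antitone a) (hd : Antitone d)
    (h : conjDiagonal W μ = conjDiagonal V d - conjDiagonal U a)
    (hμ : ∀ i, 0 ≤ μ i) (had : ∀ i, a i ≤ d i) :
    ∏ i, μ i ≤ ∏ i, (d i - a i) := by
  have hsum : ∑ i, μ i = ∑ i, (d i - a i) := by
    have := congrArg trace h
    rw [trace_sub, trace_conjDiagonal hU, trace_conjDiagonal hW, trace_conjDiagonal hV] at this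
    rw [Finset.sum_sub_distrib]
    exact_mod_cast this
  exact prod_le_prod_of_sum_min_le hμ (fun i => sub_nonneg.2 (had i)) hsum
    (sum_min_le_sum_min_sub hU hV hW ha hd h hsum)

end HermitianSpectrum

theorem stmt_3 (s u : ℕ)
    (A : Matrix (Fin s) (Fin s) ℂ) (hA : A.PosSemidef)
    (B : Matrix (Fin u) (Fin u) ℂ) (hB : B.PosSemidef)
    (X : Matrix (Fin u) (Fin s) ℂ) (hM : (Xᴴ * B * X).IsHermitian)
    (alpha : Fin s → ℝ) (halpha_mono : Antitone alpha)
    (halpha_eig : ∃ σ : Equiv.Perm (Fin s), alpha = hA.1.eigenvalues ∘ σ)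
    (halpha_le_one : ∀ i, alpha i ≤ 1)
    (lam : Fin s → ℝ) (hlam_mono : Antitone lam)
    (hlam_eig : ∃ σ : Equiv.Perm (Fin s), lam = hM.eigenvalues ∘ σ) :
    det (1 - A * (1 + Xᴴ * B * X)⁻¹) ≤ ∏ i, ((1 - alpha i / (1 + lam i) : ℝ) : ℂ) := by
  have hMpos : (Xᴴ * B * X).PosSemidef := hB.conjTranspose_mul_mul_same X
  obtain ⟨σ, hσ⟩ := halpha_eig
  obtain ⟨τ, hτ⟩ := hlam_eig
  have hlam : ∀ i, 0 ≤ lam i := fun i => by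
    rw [hτ]
    exact hMpos.eigenvalues_nonneg _
  obtain ⟨U, hU, hAU⟩ := hA.1.exists_eq_conjDiagonal σ
  obtain ⟨V, hV, hMV⟩ := hM.exists_eq_conjDiagonal τ
  rw [← hσ] at hAU
  rw [← hτ] at hMV
  set d : Fin s → ℝ := fun i => 1 + lam i with hd
  have hdpos : ∀ i, 0 < d i := fun i => by have := hlam i; positivity
  have hD : 1 + Xᴴ * B * X = conjDiagonal V d := by
    have := conjDiagonal_sub V d (fun _ => 1)
    rw [show d - (fun _ => 1) = lam by ext i; simp [hd], ← hMV, conjDiagonal_const hV] at this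
    rw [this]
    simp
  have hS : (conjDiagonal V d - conjDiagonal U alpha).PosSemidef := by
    have h₁ : (1 - A).PosSemidef := by
      have := posSemidef_conjDiagonal U (a := (fun _ => 1) - alpha)
        fun i => sub_nonneg.2 (halpha_le_one i)
      rw [conjDiagonal_sub, conjDiagonal_const hU, ← hAU] at this
      simpa using this
    have h₂ := h₁.add hMpos
    rwa [sub_add_eq_add_sub, hD, hAU] at h₂
  obtain ⟨W, hW, hSW⟩ := hS.1.exists_eq_conjDiagonal 1
  have hprod := prod_le_prod_sub hU hV hW halpha_mono (d := d)
    (fun i j hij => add_le_add_right (hlam_mono hij) 1) hSW.symm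
    (fun i => hS.eigenvalues_nonneg _) fun i => by linarith [halpha_le_one i, hlam i]
  have hdet : (conjDiagonal V d).det ≠ 0 := by
    rw [det_conjDiagonal hV]
    exact_mod_cast (Finset.prod_pos fun i _ => hdpos i).ne'
  have hfactor : 1 - A * (conjDiagonal V d)⁻¹ =
      (conjDiagonal V d - conjDiagonal U alpha) * (conjDiagonal V d)⁻¹ := by
    rw [sub_mul, mul_nonsing_inv _ hdet.isUnit, hAU]
  rw [hD, hfactor, det_mul, det_nonsing_inv, Ring.inverse_eq_inv', det_conjDiagonal hV, hSW,
    det_conjDiagonal hW, ← Complex.ofReal_inv, ← Complex.ofReal_mul, ← Complex.ofReal_prod,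
    Complex.real_le_real]
  calc _ ≤ (∏ i, (d i - alpha i)) * (∏ i, d i)⁻¹ :=
        mul_le_mul_of_nonneg_right hprod
          (inv_nonneg.2 (Finset.prod_nonneg fun i _ => (hdpos i).le))
    _ = ∏ i, (1 - alpha i / (1 + lam i)) := by
        rw [← div_eq_mul_inv, ← Finset.prod_div_distrib]
        refine Finset.prod_congr rfl fun i _ => ?_
        rw [sub_div, div_self (hdpos i).ne']
end

section
/- Let H₁ ∈ ℂ^{s×t}, H₂ ∈ ℂ^{r×u} be complex matrices, let c > 0 and P₂ > 0 be real numbers, and define the set S = {X ∈ ℂ^{u×s} : tr[X (I_s + c H₁ H₁ᴴ) Xᴴ] ≤ P₂} and the objective T(X) = tr[H₁ H₁ᴴ (I_s + Xᴴ H₂ᴴ H₂ X)⁻¹]. Let ρ be the minimum of s and the rank of H₂. Then there exists X* ∈ S minimizing T over S (i.e., T(X*) ≤ T(X) for all X ∈ S) of the form X* = Σ_{i=1}^{ρ} √(x_i/μ_i) v_i w_iᴴ, where x₁ ≥ … ≥ x_ρ ≥ 0 are real, v₁,…,v_ρ ∈ ℂ^u are orthonormal eigenvectors of H₂ᴴ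 H₂ whose eigenvalues μ₁ ≥ … ≥ μ_ρ > 0 are its ρ largest eigenvalues in nonincreasing order, and w₁,…,w_ρ ∈ ℂ^s are orthonormal eigenvectors of H₁ H₁ᴴ whose eigenvalues are its ρ largest eigenvalues in nonincreasing order. -/
open Matrix ComplexOrder

theorem antitone_eq_sum_steps (α : ℕ → ℝ) (hα : Antitone α) (hα0 : ∀ i, 0 ≤ α i) (N : ℕ) :
    ∃ δ : ℕ → ℝ, (∀ p, 0 ≤ δ p) ∧
      ∀ k < N, α k = ∑ p ∈ Finset.range N, if k ≤ p then δ p else 0 := by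
  induction N with
  | zero => exact ⟨0, by simp, by simp⟩
  | succ n ih =>
    refine ⟨fun p => if p < n then α p - α (p + 1) else α n, ?_, ?_⟩
    · intro p
      dsimp only
      split_ifs
      · linarith [hα (Nat.le_succ p)]
      · exact hα0 n
    · intro k hk
      have h : ∀ j, j ≤ n → α (n - j) = ∑ p ∈ Finset.range (n + 1),
          if n - j ≤ p then (if p < n then α p - α (p + 1) else α n) else 0 := by
        intro j
        induction j with
        | zero =>
          intro _
          rw [Finset.sum_eq_single n]
          · simp
          · intro b hb hbn
            have := Finset.mem_range.1 hb
            rw [if_neg (by omega)]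
          · simp
        | succ j ihj =>
          intro hj
          have h1 := ihj (by omega)
          have h2 : ∀ p ∈ Finset.range (n + 1),
              (if n - (j + 1) ≤ p then (if p < n then α p - α (p + 1) else α n) else 0) =
              (if n - j ≤ p then (if p < n then α p - α (p + 1) else α n) else 0) +
              (if p = n - (j + 1) then α (n - (j + 1)) - α (n - j) else 0) := by
            intro p _
            by_cases hp : p = n - (j + 1)
            · have e : n - (j + 1) + 1 = n - j := by omega
              subst hp
              rw [if_pos le_rfl, if_pos (by omega), if_neg (by omega), if_pos rfl, e]
              ring
            · rw [if_neg hp, add_zero]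
              by_cases hp' : n - j ≤ p
              · rw [if_pos (by omega), if_pos hp']
              · rw [if_neg (by omega), if_neg hp']
          rw [Finset.sum_congr rfl h2, Finset.sum_add_distrib, ← h1, Finset.sum_ite_eq',
            if_pos (Finset.mem_range.2 (by omega))]
          ring
      have := h (n - k) (by omega)
      rwa [show n - (n - k) = k by omega] at this

theorem sum_substochastic_le {u s : ℕ} (α β : ℕ → ℝ) (hα : Antitone α) (hα0 : ∀ i, 0 ≤ α i)
    (hβ : Antitone β) (hβ0 : ∀ i, 0 ≤ β i) (D : Fin u → Fin s → ℝ) (hD : ∀ k j, 0 ≤ D k j)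
    (hrow : ∀ k, ∑ j, D k j ≤ 1) (hcol : ∀ j, ∑ k, D k j ≤ 1) :
    ∑ k, ∑ j, D k j * (α k * β j) ≤ ∑ j : Fin s, α j * β j := by
  obtain ⟨δ, hδ0, hδ⟩ := antitone_eq_sum_steps α hα hα0 (max u s)
  obtain ⟨η, hη0, hη⟩ := antitone_eq_sum_steps β hβ hβ0 (max u s)
  have key : ∀ p q : ℕ, ∑ k : Fin u, ∑ j : Fin s,
      D k j * ((if (k : ℕ) ≤ p then 1 else 0) * (if (j : ℕ) ≤ q then 1 else 0)) ≤
      ∑ j : Fin s, (if (j : ℕ) ≤ p then (1 : ℝ) else 0) * (if (j : ℕ) ≤ q then 1 else 0) := by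
    intro p q
    have hcount : ∀ (n p : ℕ), ∑ j : Fin n, (if (j : ℕ) ≤ p then (1 : ℝ) else 0) =
        (min n (p + 1) : ℕ) := by
      intro n p
      rw [Fin.sum_univ_eq_sum_range (fun j => if j ≤ p then (1 : ℝ) else 0) n, Finset.sum_boole]
      congr 1
      rw [← Finset.card_range (min n (p + 1))]
      congr 1
      ext j
      simp only [Finset.mem_filter, Finset.mem_range]
      omega
    have hr : ∑ j : Fin s, (if (j : ℕ) ≤ p then (1 : ℝ) else 0) * (if (j : ℕ) ≤ q then 1 else 0)
        = (min s (min p q + 1) : ℕ) := by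
      rw [← hcount]
      refine Finset.sum_congr rfl fun j _ => ?_
      by_cases h1 : (j : ℕ) ≤ p <;> by_cases h2 : (j : ℕ) ≤ q <;> simp [h1, h2]
    have b1 : ∑ k : Fin u, ∑ j : Fin s,
        D k j * ((if (k : ℕ) ≤ p then 1 else 0) * (if (j : ℕ) ≤ q then 1 else 0)) ≤
        (min u (p + 1) : ℕ) := by
      rw [← hcount]
      refine Finset.sum_le_sum fun k _ => ?_
      by_cases hk : (k : ℕ) ≤ p
      · simp only [hk, if_true, one_mul]
        refine le_trans (Finset.sum_le_sum fun j _ => ?_) (hrow k)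
        split_ifs <;> simp [hD k j]
      · simp [hk]
    have b2 : ∑ k : Fin u, ∑ j : Fin s,
        D k j * ((if (k : ℕ) ≤ p then 1 else 0) * (if (j : ℕ) ≤ q then 1 else 0)) ≤
        (min s (q + 1) : ℕ) := by
      rw [← hcount, Finset.sum_comm]
      refine Finset.sum_le_sum fun j _ => ?_
      by_cases hj : (j : ℕ) ≤ q
      · simp only [hj, if_true, mul_one]
        refine le_trans (Finset.sum_le_sum fun k _ => ?_) (hcol j)
        split_ifs <;> simp [hD k j]
      · simp [hj]
    rw [hr]
    rcases le_total (min s (q + 1)) (min u (p + 1)) with h | h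
    · exact b2.trans (by exact_mod_cast (by omega))
    · exact b1.trans (by exact_mod_cast (by omega))
  have expand : ∀ (k j : ℕ), k < max u s → j < max u s → α k * β j =
      ∑ p ∈ Finset.range (max u s), ∑ q ∈ Finset.range (max u s),
        δ p * η q * ((if k ≤ p then 1 else 0) * (if j ≤ q then 1 else 0)) := by
    intro k j hk hj
    rw [hδ k hk, hη j hj, Finset.sum_mul_sum]
    refine Finset.sum_congr rfl fun p _ => Finset.sum_congr rfl fun q _ => ?_
    split_ifs <;> simp
  have e1 : ∑ k, ∑ j, D k j * (α k * β j) =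
      ∑ p ∈ Finset.range (max u s), ∑ q ∈ Finset.range (max u s), δ p * η q *
        ∑ k : Fin u, ∑ j : Fin s,
          D k j * ((if (k : ℕ) ≤ p then 1 else 0) * (if (j : ℕ) ≤ q then 1 else 0)) := by
    simp only [Finset.mul_sum]
    rw [Finset.sum_congr rfl fun k _ => Finset.sum_congr rfl fun j _ => by
      rw [expand k j (by omega) (by omega)]]
    simp only [Finset.mul_sum]
    rw [Finset.sum_congr rfl fun k _ => Finset.sum_comm, Finset.sum_comm]
    refine Finset.sum_congr rfl fun p _ => ?_
    rw [Finset.sum_congr rfl fun k _ => Finset.sum_comm, Finset.sum_comm]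
    refine Finset.sum_congr rfl fun q _ => Finset.sum_congr rfl fun k _ =>
      Finset.sum_congr rfl fun j _ => ?_
    ring
  have e2 : ∑ j : Fin s, α j * β j =
      ∑ p ∈ Finset.range (max u s), ∑ q ∈ Finset.range (max u s), δ p * η q *
        ∑ j : Fin s, (if (j : ℕ) ≤ p then (1 : ℝ) else 0) * (if (j : ℕ) ≤ q then 1 else 0) := by
    simp only [Finset.mul_sum]
    rw [Finset.sum_congr rfl fun (j : Fin s) _ => expand j j (by omega) (by omega),
      Finset.sum_comm]
    refine Finset.sum_congr rfl fun p _ => ?_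
    rw [Finset.sum_comm]
  rw [e1, e2]
  exact Finset.sum_le_sum fun p _ => Finset.sum_le_sum fun q _ =>
    mul_le_mul_of_nonneg_left (key p q) (mul_nonneg (hδ0 p) (hη0 q))

theorem exists_sorted_spectral_decomposition {n : ℕ} {P : Matrix (Fin n) (Fin n) ℂ}
    (hP : P.PosSemidef) :
    ∃ (U : Matrix (Fin n) (Fin n) ℂ) (d : ℕ → ℝ), Uᴴ * U = 1 ∧ U * Uᴴ = 1 ∧ Antitone d ∧
      (∀ i, 0 ≤ d i) ∧ (∀ i, n ≤ i → d i = 0) ∧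
      P = U * diagonal (fun i : Fin n => (d i : ℂ)) * Uᴴ ∧
      ∃ (h : P.IsHermitian) (σ : Equiv.Perm (Fin n)),
        (fun i : Fin n => d i) = h.eigenvalues ∘ σ := by
  have h := hP.1
  set σ := Tuple.sort (fun i => -h.eigenvalues i)
  have hσ : Antitone (h.eigenvalues ∘ σ) := by
    intro i j hij
    have := Tuple.monotone_sort (fun i => -h.eigenvalues i) hij
    simpa using this
  set V : Matrix (Fin n) (Fin n) ℂ := (h.eigenvectorUnitary : Matrix (Fin n) (Fin n) ℂ) with hV
  have hV1 : Vᴴ * V = 1 := Unitary.coe_star_mul_self h.eigenvectorUnitary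
  have hV2 : V * Vᴴ = 1 := Unitary.coe_mul_star_self h.eigenvectorUnitary
  have hd : (fun i : Fin n => if hi : (i : ℕ) < n then h.eigenvalues (σ ⟨i, hi⟩) else 0)
      = h.eigenvalues ∘ σ := by
    ext i
    simp
  refine ⟨V.submatrix id σ, fun i => if hi : i < n then h.eigenvalues (σ ⟨i, hi⟩) else 0,
    ?_, ?_, ?_, ?_, ?_, ?_, h, σ, hd⟩
  · rw [conjTranspose_submatrix, ← submatrix_mul _ _ σ id σ Function.bijective_id, hV1]
    simp
  · rw [conjTranspose_submatrix, submatrix_mul_equiv, hV2]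
    simp
  · intro i j hij
    dsimp only
    by_cases hj : j < n
    · rw [dif_pos hj, dif_pos (by omega)]
      exact hσ (show (⟨i, by omega⟩ : Fin n) ≤ ⟨j, hj⟩ from hij)
    · rw [dif_neg hj]
      split_ifs
      · exact hP.eigenvalues_nonneg _
      · exact le_rfl
  · intro i
    dsimp only
    split_ifs
    · exact hP.eigenvalues_nonneg _
    · exact le_rfl
  · intro i hi
    exact dif_neg (by omega)
  · have e : diagonal (fun i : Fin n => ((if hi : (i : ℕ) < n then
        h.eigenvalues (σ ⟨i, hi⟩) else 0 : ℝ) : ℂ)) =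
        (diagonal (RCLike.ofReal ∘ h.eigenvalues) : Matrix (Fin n) (Fin n) ℂ).submatrix σ σ := by
      rw [submatrix_diagonal_equiv]
      congr 1
      ext i
      simp
    rw [e, conjTranspose_submatrix, submatrix_mul_equiv, submatrix_mul_equiv]
    have := h.spectral_theorem
    rw [Unitary.conjStarAlgAut_apply] at this
    simpa [star_eq_conjTranspose] using this

theorem conjTranspose_mul_self_apply {m n : Type*} [Fintype m] (E : Matrix m n ℂ) (j : n) :
    (Eᴴ * E) j j = ((∑ k, ‖E k j‖ ^ 2 : ℝ) : ℂ) := by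
  simp [mul_apply, Complex.conj_mul']

theorem mul_conjTranspose_self_apply {m n : Type*} [Fintype n] (E : Matrix m n ℂ) (j : m) :
    (E * Eᴴ) j j = ((∑ k, ‖E j k‖ ^ 2 : ℝ) : ℂ) := by
  simp [mul_apply, Complex.mul_conj']

theorem star_dotProduct_self_eq {m : Type*} [Fintype m] (z : m → ℂ) :
    star z ⬝ᵥ z = ((∑ k, ‖z k‖ ^ 2 : ℝ) : ℂ) := by
  simp [dotProduct, Complex.conj_mul']

theorem sum_sq_div_le_one_of_gram_diagonal {m n : Type*} [Fintype m] [Fintype n] [DecidableEq n]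
    (E : Matrix m n ℂ) (w : n → ℝ) (hE : Eᴴ * E = diagonal (fun j => (w j : ℂ))) (k : m) :
    ∑ j, ‖E k j‖ ^ 2 / w j ≤ 1 := by
  set S := ∑ j, ‖E k j‖ ^ 2 / w j with hS
  set g : n → ℂ := fun j => star (E k j) / (w j : ℂ) with hg
  set z := E *ᵥ g with hz
  have hzk : z k = (S : ℂ) := by
    rw [hz, hS, mulVec, dotProduct]
    push_cast
    refine Finset.sum_congr rfl fun j _ => ?_
    rw [hg]
    simp only [RCLike.star_def]
    rw [← mul_div_assoc, Complex.mul_conj']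
  have hnorm : ∑ i, ‖z i‖ ^ 2 = S := by
    have h1 : star z ⬝ᵥ z = (S : ℂ) := by
      rw [hz, star_mulVec, dotProduct_mulVec, vecMul_vecMul, hE, hS, dotProduct]
      push_cast
      refine Finset.sum_congr rfl fun j _ => ?_
      rw [vecMul_diagonal, hg]
      simp only [Pi.star_apply, star_div₀, RCLike.star_def, Complex.conj_ofReal, Complex.conj_conj]
      by_cases hw : (w j : ℂ) = 0
      · simp [hw]
      · rw [← Complex.mul_conj']
        field_simp
    rw [star_dotProduct_self_eq] at h1
    exact_mod_cast h1
  have hle : ‖z k‖ ^ 2 ≤ S := by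
    rw [← hnorm]
    exact Finset.single_le_sum (f := fun i => ‖z i‖ ^ 2) (fun i _ => by positivity)
      (Finset.mem_univ k)
  rw [hzk, Complex.norm_real, Real.norm_eq_abs, sq_abs] at hle
  nlinarith

theorem sum_row_sq_eq_one {n : Type*} [Fintype n] [DecidableEq n] {O : Matrix n n ℂ}
    (hO : O * Oᴴ = 1) (k : n) : ∑ j, ‖O k j‖ ^ 2 = 1 := by
  have := mul_conjTranspose_self_apply O k
  rw [hO, one_apply_eq] at this
  exact_mod_cast this.symm

theorem sum_col_sq_eq_one {n : Type*} [Fintype n] [DecidableEq n] {O : Matrix n n ℂ}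
    (hO : Oᴴ * O = 1) (j : n) : ∑ k, ‖O k j‖ ^ 2 = 1 := by
  have := conjTranspose_mul_self_apply O j
  rw [hO, one_apply_eq] at this
  exact_mod_cast this.symm

theorem mul_diagonal_mul_conjTranspose_apply {m n : Type*} [Fintype n] [DecidableEq n]
    (O : Matrix m n ℂ) (d : n → ℝ) (k : m) :
    (O * diagonal (fun i => (d i : ℂ)) * Oᴴ) k k = ((∑ l, d l * ‖O k l‖ ^ 2 : ℝ) : ℂ) := by
  rw [mul_apply]
  push_cast
  refine Finset.sum_congr rfl fun l _ => ?_
  rw [mul_diagonal, conjTranspose_apply, RCLike.star_def, ← Complex.mul_conj']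
  ring

theorem sum_mul_eigenvalues_le {s : ℕ} (V Q K : Matrix (Fin s) (Fin s) ℂ) (ν γ : ℕ → ℝ) (Γ : ℝ)
    (hV1 : Vᴴ * V = 1) (hV2 : V * Vᴴ = 1) (hQ1 : Qᴴ * Q = 1) (hQ2 : Q * Qᴴ = 1)
    (hν : Antitone ν) (hν0 : ∀ i, 0 ≤ ν i) (hγ : Monotone γ) (hΓ : ∀ i, γ i ≤ Γ)
    (hK : K = V * diagonal (fun i : Fin s => (ν i : ℂ)) * Vᴴ) :
    ∑ k : Fin s, γ k * ν k ≤ ∑ k : Fin s, γ k * ((Qᴴ * K * Q) k k).re := by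
  set O := Qᴴ * V with hO
  have hO1 : O * Oᴴ = 1 := by
    rw [hO, conjTranspose_mul, conjTranspose_conjTranspose, Matrix.mul_assoc,
      ← Matrix.mul_assoc V, hV2, Matrix.one_mul, hQ1]
  have hO2 : Oᴴ * O = 1 := by
    rw [hO, conjTranspose_mul, conjTranspose_conjTranspose, Matrix.mul_assoc,
      ← Matrix.mul_assoc Q, hQ2, Matrix.one_mul, hV1]
  have hrow := sum_row_sq_eq_one hO1
  have hcol := sum_col_sq_eq_one hO2
  have hd : ∀ k : Fin s, ((Qᴴ * K * Q) k k).re = ∑ l : Fin s, ν l * ‖O k l‖ ^ 2 := by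
    intro k
    have : Qᴴ * K * Q = O * diagonal (fun i : Fin s => (ν i : ℂ)) * Oᴴ := by
      rw [hK, hO, conjTranspose_mul, conjTranspose_conjTranspose]
      simp only [Matrix.mul_assoc]
    rw [this, mul_diagonal_mul_conjTranspose_apply O (fun i : Fin s => ν i), Complex.ofReal_re]
  have main := sum_substochastic_le (fun k => Γ - γ k) ν (fun i j hij => by
    have := hγ hij
    dsimp only
    linarith) (fun i => sub_nonneg.2 (hΓ i)) hν hν0 (fun k l => ‖O k l‖ ^ 2)
    (fun _ _ => by positivity) (fun k => (hrow k).le) (fun l => (hcol l).le)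
  have e1 : ∑ k : Fin s, ∑ l : Fin s, ‖O k l‖ ^ 2 * ((Γ - γ k) * ν l) =
      Γ * ∑ l : Fin s, ν l - ∑ k : Fin s, γ k * ((Qᴴ * K * Q) k k).re := by
    have : Γ * ∑ l : Fin s, ν l = ∑ k : Fin s, ∑ l : Fin s, ‖O k l‖ ^ 2 * (Γ * ν l) := by
      rw [Finset.sum_comm, Finset.mul_sum]
      refine Finset.sum_congr rfl fun l _ => ?_
      rw [← Finset.sum_mul, hcol l, one_mul]
    rw [this, ← Finset.sum_sub_distrib]
    refine Finset.sum_congr rfl fun k _ => ?_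
    rw [hd k, Finset.mul_sum, ← Finset.sum_sub_distrib]
    refine Finset.sum_congr rfl fun l _ => ?_
    ring
  have e2 : ∑ k : Fin s, (Γ - γ k) * ν k = Γ * ∑ l : Fin s, ν l - ∑ k : Fin s, γ k * ν k := by
    rw [Finset.mul_sum, ← Finset.sum_sub_distrib]
    exact Finset.sum_congr rfl fun l _ => by ring
  rw [e1, e2] at main
  linarith

theorem sum_mul_re_diag_le {s : ℕ} (N V : Matrix (Fin s) (Fin s) ℂ) (ν c : ℕ → ℝ)
    (hV1 : Vᴴ * V = 1) (hV2 : V * Vᴴ = 1) (hν : Antitone ν) (hν0 : ∀ i, 0 ≤ ν i)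
    (hc : Antitone c) (hc0 : ∀ i, 0 ≤ c i)
    (hN : Nᴴ * N = V * diagonal (fun i : Fin s => (ν i : ℂ)) * Vᴴ) :
    ∑ i : Fin s, c i * (N i i).re ≤ ∑ i : Fin s, c i * √(ν i) := by
  set E := N * V with hE
  have hEE : Eᴴ * E = diagonal (fun i : Fin s => (ν i : ℂ)) := by
    rw [hE, conjTranspose_mul, Matrix.mul_assoc, ← Matrix.mul_assoc Nᴴ, hN]
    simp only [Matrix.mul_assoc]
    rw [hV1, Matrix.mul_one, ← Matrix.mul_assoc, hV1, Matrix.one_mul]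
  have hcolE : ∀ l : Fin s, ∑ i, ‖E i l‖ ^ 2 = ν l := by
    intro l
    have := conjTranspose_mul_self_apply E l
    rw [hEE, diagonal_apply_eq] at this
    exact_mod_cast this.symm
  have hNE : N = E * Vᴴ := by rw [hE, Matrix.mul_assoc, hV2, Matrix.mul_one]
  have main := sum_substochastic_le c (fun l => √(ν l)) hc hc0
    (fun i j hij => Real.sqrt_le_sqrt (hν hij)) (fun _ => Real.sqrt_nonneg _)
    (fun (i l : Fin s) => (‖E i l‖ ^ 2 / ν l + ‖V i l‖ ^ 2) / 2)
    (fun i l => by have := hν0 l; positivity)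
    (fun i => by
      rw [← Finset.sum_div, Finset.sum_add_distrib, sum_row_sq_eq_one hV2]
      have := sum_sq_div_le_one_of_gram_diagonal E (fun i : Fin s => ν i) hEE i
      linarith)
    (fun l => by
      rw [← Finset.sum_div, Finset.sum_add_distrib, sum_col_sq_eq_one hV1, ← Finset.sum_div,
        hcolE]
      have := div_self_le_one (ν l)
      linarith)
  refine le_trans (Finset.sum_le_sum fun i _ => ?_) main
  have h1 : (N i i).re ≤ ∑ l, ‖E i l‖ * ‖V i l‖ := by
    conv_lhs => rw [hNE, mul_apply, Complex.re_sum]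
    refine Finset.sum_le_sum fun l _ => (Complex.re_le_norm _).trans ?_
    rw [norm_mul, conjTranspose_apply, norm_star]
  refine (mul_le_mul_of_nonneg_left h1 (hc0 i)).trans ?_
  rw [Finset.mul_sum]
  refine Finset.sum_le_sum fun l _ => ?_
  have h2 : ‖E i l‖ * ‖V i l‖ ≤ (‖E i l‖ ^ 2 / ν l + ‖V i l‖ ^ 2) / 2 * √(ν l) := by
    rcases (hν0 l).eq_or_lt with h0 | hpos
    · have : ‖E i l‖ ^ 2 ≤ 0 := by
        rw [h0, ← hcolE l]
        exact Finset.single_le_sum (f := fun i => ‖E i l‖ ^ 2) (fun i _ => by positivity)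
          (Finset.mem_univ i)
      have h3 : ‖E i l‖ = 0 := by nlinarith [norm_nonneg (E i l)]
      rw [← h0]
      simp [h3]
    · have hs := Real.sqrt_pos.2 hpos
      have hsq := Real.sq_sqrt hpos.le
      set r := √(ν l)
      rw [← hsq]
      have : (‖E i l‖ ^ 2 / r ^ 2 + ‖V i l‖ ^ 2) / 2 * r - ‖E i l‖ * ‖V i l‖ =
          (‖E i l‖ / r - ‖V i l‖) ^ 2 * r / 2 := by
        field_simp
        ring
      have h4 : 0 ≤ (‖E i l‖ / r - ‖V i l‖) ^ 2 * r / 2 := by positivity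
      linarith
  calc c i * (‖E i l‖ * ‖V i l‖) ≤
      c i * ((‖E i l‖ ^ 2 / ν l + ‖V i l‖ ^ 2) / 2 * √(ν l)) :=
        mul_le_mul_of_nonneg_left h2 (hc0 i)
    _ = _ := by ring

theorem sum_div_le_sum_norm_sq {u s : ℕ} (b w : ℕ → ℝ) (hb : Antitone b) (hb0 : ∀ i, 0 ≤ b i)
    (hw : Antitone w) (hw0 : ∀ i, 0 ≤ w i) (X : Matrix (Fin u) (Fin s) ℂ)
    (Q : Matrix (Fin s) (Fin s) ℂ) (hQ1 : Qᴴ * Q = 1) (hQ2 : Q * Qᴴ = 1)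
    (hX : Xᴴ * diagonal (fun i : Fin u => (b i : ℂ)) * X =
      Q * diagonal (fun i : Fin s => (w i : ℂ)) * Qᴴ) {ε : ℝ} (hε : 0 < ε) :
    ∑ j : Fin s, w j / (b j + ε) ≤ ∑ k, ∑ j, ‖X k j‖ ^ 2 := by
  set ξ := X * Q with hξ
  have hgram : ξᴴ * diagonal (fun i : Fin u => (b i : ℂ)) * ξ =
      diagonal (fun i : Fin s => (w i : ℂ)) := by
    have : ξᴴ * diagonal (fun i : Fin u => (b i : ℂ)) * ξ =
        Qᴴ * (Xᴴ * diagonal (fun i : Fin u => (b i : ℂ)) * X) * Q := by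
      rw [hξ, conjTranspose_mul]
      simp only [Matrix.mul_assoc]
    rw [this, hX]
    simp only [Matrix.mul_assoc]
    rw [hQ1, Matrix.mul_one, ← Matrix.mul_assoc, hQ1, Matrix.one_mul]
  have hnorm : ∑ k, ∑ j, ‖X k j‖ ^ 2 = ∑ k, ∑ j, ‖ξ k j‖ ^ 2 := by
    refine Finset.sum_congr rfl fun k _ => ?_
    have h1 := mul_conjTranspose_self_apply X k
    have h2 := mul_conjTranspose_self_apply ξ k
    have h3 : ξ * ξᴴ = X * Xᴴ := by
      rw [hξ, conjTranspose_mul, Matrix.mul_assoc, ← Matrix.mul_assoc Q, hQ2, Matrix.one_mul]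
    rw [h3, h1] at h2
    exact_mod_cast h2
  set η : Matrix (Fin u) (Fin s) ℂ := diagonal (fun i : Fin u => ((√(b i) : ℝ) : ℂ)) * ξ with hη
  have hηη : ηᴴ * η = diagonal (fun i : Fin s => (w i : ℂ)) := by
    rw [← hgram, hη, conjTranspose_mul, diagonal_conjTranspose, Matrix.mul_assoc,
      ← Matrix.mul_assoc (diagonal _), diagonal_mul_diagonal, Matrix.mul_assoc]
    congr 3
    ext i
    simp only [Pi.star_apply, RCLike.star_def, Complex.conj_ofReal]
    rw [← Complex.ofReal_mul, Real.mul_self_sqrt (hb0 i)]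
  have hηn : ∀ k j, ‖η k j‖ ^ 2 = b k * ‖ξ k j‖ ^ 2 := by
    intro k j
    rw [hη, diagonal_mul, norm_mul, mul_pow, Complex.norm_real, Real.norm_eq_abs, sq_abs,
      Real.sq_sqrt (hb0 k)]
  have hrow : ∀ k, ∑ j : Fin s, ‖η k j‖ ^ 2 / w j ≤ 1 :=
    sum_sq_div_le_one_of_gram_diagonal η (fun j : Fin s => w j) hηη
  have hcolsum : ∀ j : Fin s, ∑ k, ‖η k j‖ ^ 2 = w j := by
    intro j
    have := conjTranspose_mul_self_apply η j
    rw [hηη, diagonal_apply_eq] at this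
    exact_mod_cast this.symm
  have main := sum_substochastic_le (fun k => 1 / ε - 1 / (b k + ε)) w
    (fun i j hij => by
      have h1 := hb hij
      have h2 := hb0 j
      have : 1 / (b i + ε) ≤ 1 / (b j + ε) := by gcongr
      dsimp only
      linarith)
    (fun i => by
      have h2 := hb0 i
      have : 1 / (b i + ε) ≤ 1 / ε := by gcongr; linarith
      linarith) hw hw0
    (fun k (j : Fin s) => ‖η k j‖ ^ 2 / w j) (fun k j => by have := hw0 j; positivity) hrow
    (fun j => by
      rw [← Finset.sum_div, hcolsum]
      exact div_self_le_one _)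
  have e1 : ∑ k, ∑ j : Fin s, ‖η k j‖ ^ 2 / w j * ((1 / ε - 1 / (b k + ε)) * w j) =
      1 / ε * ∑ j : Fin s, w j -
        ∑ k, ∑ j : Fin s, ‖η k j‖ ^ 2 / w j * (1 / (b k + ε) * w j) := by
    have : 1 / ε * ∑ j : Fin s, w j =
        ∑ k, ∑ j : Fin s, ‖η k j‖ ^ 2 / w j * (1 / ε * w j) := by
      rw [Finset.sum_comm, Finset.mul_sum]
      refine Finset.sum_congr rfl fun j _ => ?_
      rw [← Finset.sum_mul, ← Finset.sum_div, hcolsum]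
      by_cases h : w j = 0
      · simp [h]
      · rw [div_self h, one_mul]
    rw [this, ← Finset.sum_sub_distrib]
    refine Finset.sum_congr rfl fun k _ => ?_
    rw [← Finset.sum_sub_distrib]
    exact Finset.sum_congr rfl fun j _ => by ring
  have e2 : ∑ j : Fin s, (1 / ε - 1 / (b j + ε)) * w j =
      1 / ε * ∑ j : Fin s, w j - ∑ j : Fin s, w j / (b j + ε) := by
    rw [Finset.mul_sum, ← Finset.sum_sub_distrib]
    exact Finset.sum_congr rfl fun j _ => by ring
  rw [e1, e2] at main
  have e3 : ∑ k, ∑ j : Fin s, ‖η k j‖ ^ 2 / w j * (1 / (b k + ε) * w j) ≤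
      ∑ k, ∑ j, ‖ξ k j‖ ^ 2 := by
    refine Finset.sum_le_sum fun k _ => Finset.sum_le_sum fun j _ => ?_
    rw [hηn]
    have hbk := hb0 k
    by_cases h : w j = 0
    · rw [h]
      simp
    · have : b k * ‖ξ k j‖ ^ 2 / w j * (1 / (b k + ε) * w j) =
          b k / (b k + ε) * ‖ξ k j‖ ^ 2 := by
        field_simp
      rw [this]
      refine mul_le_of_le_one_left (by positivity) ?_
      rw [div_le_one (by positivity)]
      linarith
  rw [hnorm]
  linarith

theorem sum_norm_sq_diagonal_sub {n : Type*} [Fintype n] [DecidableEq n] (r : n → ℝ)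
    (y : Matrix n n ℂ) :
    ∑ i, ∑ j, ‖(diagonal (fun i => (r i : ℂ)) - y) i j‖ ^ 2 =
      ∑ i, (r i ^ 2 - 2 * r i * (y i i).re) + ∑ i, ∑ j, ‖y i j‖ ^ 2 := by
  rw [← Finset.sum_add_distrib]
  refine Finset.sum_congr rfl fun i _ => ?_
  have h : ∀ j, ‖(diagonal (fun i => (r i : ℂ)) - y) i j‖ ^ 2 =
      (if j = i then r i ^ 2 - 2 * r i * (y i i).re else 0) + ‖y i j‖ ^ 2 := by
    intro j
    by_cases hij : j = i
    · subst hij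
      rw [if_pos rfl, Matrix.sub_apply, diagonal_apply_eq, ← Complex.normSq_eq_norm_sq,
        ← Complex.normSq_eq_norm_sq, Complex.normSq_apply, Complex.normSq_apply]
      simp
      ring
    · rw [if_neg hij, Matrix.sub_apply, diagonal_apply_ne' _ hij]
      simp
  rw [Finset.sum_congr rfl fun j _ => h j, Finset.sum_add_distrib]
  simp

theorem sum_div_le_re_trace {s : ℕ} (a w : ℕ → ℝ) (ha : Antitone a) (ha0 : ∀ i, 0 ≤ a i)
    (hw : Antitone w) (hw0 : ∀ i, 0 ≤ w i) {c : ℝ} (hc : 0 < c)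
    (Y G Q : Matrix (Fin s) (Fin s) ℂ) (hG : G * (1 + Y) = 1) (hGH : Gᴴ = G)
    (hQ1 : Qᴴ * Q = 1) (hQ2 : Q * Qᴴ = 1)
    (hW : diagonal (fun i : Fin s => ((√(1 + c * a i) : ℝ) : ℂ)) * Y *
        diagonal (fun i : Fin s => ((√(1 + c * a i) : ℝ) : ℂ)) =
      Q * diagonal (fun i : Fin s => (w i : ℂ)) * Qᴴ) {ε : ℝ} (hε : 0 < ε) :
    ∑ j : Fin s, a j * (1 + c * a j) / (1 + c * a j + (w j + ε)) ≤
      ((diagonal (fun i : Fin s => (a i : ℂ)) * G).trace).re := by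
  have hm : ∀ i, 0 < 1 + c * a i := fun i => by have := ha0 i; positivity
  set Ra : Matrix (Fin s) (Fin s) ℂ := diagonal (fun i : Fin s => ((√(a i) : ℝ) : ℂ)) with hRa
  set Rm : Matrix (Fin s) (Fin s) ℂ :=
    diagonal (fun i : Fin s => ((√(1 + c * a i) : ℝ) : ℂ)) with hRm
  set Ri : Matrix (Fin s) (Fin s) ℂ :=
    diagonal (fun i : Fin s => (((√(1 + c * a i))⁻¹ : ℝ) : ℂ)) with hRi
  have hdiagH : ∀ f : Fin s → ℝ, (diagonal (fun i => (f i : ℂ)))ᴴ =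
      diagonal (fun i => (f i : ℂ)) := by
    intro f
    rw [diagonal_conjTranspose]
    congr 1
    ext i
    simp
  have hRaH : Raᴴ = Ra := hdiagH _
  have hRiH : Riᴴ = Ri := hdiagH _
  have hRaRa : Ra * Ra = diagonal (fun i : Fin s => (a i : ℂ)) := by
    rw [hRa, diagonal_mul_diagonal]
    congr 1
    ext i
    rw [← Complex.ofReal_mul, Real.mul_self_sqrt (ha0 i)]
  have hRmRi : Rm * Ri = 1 := by
    rw [hRm, hRi, diagonal_mul_diagonal, ← diagonal_one]
    congr 1
    ext i
    rw [← Complex.ofReal_mul, mul_inv_cancel₀ (Real.sqrt_pos.2 (hm i)).ne', Complex.ofReal_one]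
  have hRiRm : Ri * Rm = 1 := by
    rw [hRm, hRi, diagonal_mul_diagonal, ← diagonal_one]
    congr 1
    ext i
    rw [← Complex.ofReal_mul, inv_mul_cancel₀ (Real.sqrt_pos.2 (hm i)).ne', Complex.ofReal_one]
  set J := Ra * G * Ri with hJ
  set N := J * (Rm * Y * Rm) with hN
  have hNeq : N = Ra * (G * Y) * Rm := by
    calc N = Ra * G * (Ri * Rm) * Y * Rm := by rw [hN, hJ]; simp only [Matrix.mul_assoc]
      _ = _ := by rw [hRiRm]; simp only [Matrix.mul_assoc, Matrix.mul_one]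
  have hGY : G * Y = 1 - G := by
    rw [Matrix.mul_add, Matrix.mul_one] at hG
    rw [← hG]
    abel
  have hRaG : Ra * G = Ra - N * Ri := by
    rw [hNeq, Matrix.mul_assoc, hRmRi, hGY, Matrix.mul_one, Matrix.mul_sub, Matrix.mul_one]
    abel
  -- split the trace into two sums of squares
  have hGsplit : G = G * G + G * Y * G := by
    calc G = G * (1 + Y) * G := by rw [hG, Matrix.one_mul]
      _ = _ := by simp only [Matrix.mul_add, Matrix.add_mul, Matrix.mul_one]
  have htr : (diagonal (fun i : Fin s => (a i : ℂ)) * G).trace =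
      ((Ra * G) * (Ra * G)ᴴ).trace + ((J * Q) * diagonal (fun i : Fin s => (w i : ℂ)) *
        (J * Q)ᴴ).trace := by
    have e1 : (Ra * G) * (Ra * G)ᴴ = Ra * (G * G * Ra) := by
      rw [conjTranspose_mul, hGH, hRaH]
      simp only [Matrix.mul_assoc]
    have e2 : (J * Q) * diagonal (fun i : Fin s => (w i : ℂ)) * (J * Q)ᴴ =
        Ra * (G * Y * G * Ra) := by
      calc _ = J * (Q * diagonal (fun i : Fin s => (w i : ℂ)) * Qᴴ) * Jᴴ := by
            rw [conjTranspose_mul]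
            simp only [Matrix.mul_assoc]
        _ = Ra * G * (Ri * Rm) * Y * (Rm * Ri) * G * Ra := by
            rw [← hW, hJ, conjTranspose_mul, conjTranspose_mul, hGH, hRaH, hRiH]
            simp only [Matrix.mul_assoc]
        _ = _ := by
            rw [hRiRm, hRmRi]
            simp only [Matrix.mul_assoc, Matrix.one_mul]
    rw [e1, e2, trace_mul_comm Ra, trace_mul_comm Ra, ← hRaRa, trace_mul_comm (Ra * Ra)]
    conv_lhs => rw [hGsplit]
    rw [Matrix.add_mul, trace_add]
    simp only [Matrix.mul_assoc]
  have ht1 : ((Ra * G) * (Ra * G)ᴴ).trace.re = ∑ i : Fin s,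
      (√(a i) ^ 2 - 2 * √(a i) * ((N * Ri) i i).re) + ∑ i, ∑ j, ‖(N * Ri) i j‖ ^ 2 := by
    rw [trace, Complex.re_sum, ← sum_norm_sq_diagonal_sub (fun i : Fin s => √(a i)) (N * Ri),
      ← hRa, ← hRaG]
    refine Finset.sum_congr rfl fun i _ => ?_
    rw [diag_apply, mul_conjTranspose_self_apply, Complex.ofReal_re]
  have ht2 : ((J * Q) * diagonal (fun i : Fin s => (w i : ℂ)) * (J * Q)ᴴ).trace.re =
      ∑ k : Fin s, w k * ∑ i, ‖(J * Q) i k‖ ^ 2 := by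
    simp only [Finset.mul_sum]
    rw [trace, Complex.re_sum, Finset.sum_comm]
    refine Finset.sum_congr rfl fun i _ => ?_
    rw [diag_apply, mul_diagonal_mul_conjTranspose_apply (J * Q) (fun i : Fin s => w i),
      Complex.ofReal_re]
  obtain ⟨V, ν, hV1, hV2, hν, hν0, -, hNN, -⟩ :=
    exists_sorted_spectral_decomposition (posSemidef_conjTranspose_mul_self N)
  have hNRi : ∀ i j : Fin s, (N * Ri) i j = N i j * (((√(1 + c * a j))⁻¹ : ℝ) : ℂ) := by
    intro i j
    rw [hRi, mul_diagonal]
  -- the three trace inequalities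
  have i1 := sum_mul_re_diag_le N V ν (fun i => √(a i) * (√(1 + c * a i))⁻¹) hV1 hV2 hν hν0
    (fun i j hij => by
      have h1 := ha hij
      have h2 := ha0 j
      have h3 := hm i
      have h4 := hm j
      dsimp only
      rw [← div_eq_mul_inv, ← div_eq_mul_inv, ← Real.sqrt_div h2, ← Real.sqrt_div (ha0 i)]
      apply Real.sqrt_le_sqrt
      rw [div_le_div_iff₀ h4 h3]
      nlinarith)
    (fun i => by positivity) hNN
  have i2 := sum_mul_eigenvalues_le V 1 (Nᴴ * N) ν (fun i => 1 / (1 + c * a i)) 1 hV1 hV2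
    (by simp) (by simp) hν hν0
    (fun i j hij => by
      have h1 := ha hij
      have h4 := hm j
      dsimp only
      gcongr)
    (fun i => by
      rw [div_le_one (hm i)]
      have := ha0 i
      have : 0 ≤ c * a i := by positivity
      linarith) hNN
  have i3 := sum_mul_eigenvalues_le V Q (Nᴴ * N) ν (fun i => 1 / (w i + ε)) (1 / ε) hV1 hV2
    hQ1 hQ2 hν hν0
    (fun i j hij => by
      have h1 := hw hij
      have h4 := hw0 j
      dsimp only
      gcongr)
    (fun i => by
      have h4 := hw0 i
      gcongr
      linarith) hNN
  have j2 : ∑ i, ∑ j, ‖(N * Ri) i j‖ ^ 2 =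
      ∑ k : Fin s, 1 / (1 + c * a k) *
        ((1ᴴ * (Nᴴ * N) * 1 : Matrix (Fin s) (Fin s) ℂ) k k).re := by
    rw [Finset.sum_comm]
    refine Finset.sum_congr rfl fun j _ => ?_
    rw [conjTranspose_one, Matrix.one_mul, Matrix.mul_one, conjTranspose_mul_self_apply,
      Complex.ofReal_re, Finset.mul_sum]
    refine Finset.sum_congr rfl fun i _ => ?_
    rw [hNRi, norm_mul, mul_pow, Complex.norm_real, Real.norm_eq_abs, sq_abs, inv_pow,
      Real.sq_sqrt (hm j).le]
    ring
  have hNQ : N * Q = J * Q * diagonal (fun i : Fin s => (w i : ℂ)) := by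
    rw [hN, hW]
    simp only [Matrix.mul_assoc]
    rw [hQ1, Matrix.mul_one]
  have j3 : ∑ k : Fin s, 1 / (w k + ε) * ((Qᴴ * (Nᴴ * N) * Q) k k).re ≤
      ∑ k : Fin s, w k * ∑ i, ‖(J * Q) i k‖ ^ 2 := by
    refine Finset.sum_le_sum fun k _ => ?_
    have e : Qᴴ * (Nᴴ * N) * Q = (N * Q)ᴴ * (N * Q) := by
      rw [conjTranspose_mul N Q]
      simp only [Matrix.mul_assoc]
    have e' : ∀ i, ‖(N * Q) i k‖ ^ 2 = w k ^ 2 * ‖(J * Q) i k‖ ^ 2 := by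
      intro i
      rw [hNQ, mul_diagonal, norm_mul, mul_pow, Complex.norm_real, Real.norm_eq_abs, sq_abs,
        mul_comm]
    rw [e, conjTranspose_mul_self_apply, Complex.ofReal_re, Finset.sum_congr rfl fun i _ => e' i,
      ← Finset.mul_sum, ← mul_assoc]
    have hk := hw0 k
    refine mul_le_mul_of_nonneg_right ?_ (Finset.sum_nonneg fun i _ => by positivity)
    rw [one_div, inv_mul_le_iff₀ (by positivity)]
    nlinarith
  have j1 : ∑ i : Fin s, (√(a i) ^ 2 - 2 * √(a i) * ((N * Ri) i i).re) =
      ∑ i : Fin s, a i - 2 * ∑ i : Fin s, √(a i) * (√(1 + c * a i))⁻¹ * (N i i).re := by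
    rw [Finset.mul_sum, ← Finset.sum_sub_distrib]
    refine Finset.sum_congr rfl fun i _ => ?_
    rw [hNRi, Complex.re_mul_ofReal, Real.sq_sqrt (ha0 i)]
    ring
  have hscalar : ∑ j : Fin s, a j * (1 + c * a j) / (1 + c * a j + (w j + ε)) ≤
      ∑ i : Fin s, a i - 2 * ∑ i : Fin s, √(a i) * (√(1 + c * a i))⁻¹ * √(ν i) +
        ∑ i : Fin s, 1 / (1 + c * a i) * ν i + ∑ i : Fin s, 1 / (w i + ε) * ν i := by
    rw [Finset.mul_sum, ← Finset.sum_sub_distrib, ← Finset.sum_add_distrib,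
      ← Finset.sum_add_distrib]
    refine Finset.sum_le_sum fun i _ => ?_
    have hd : 0 < w i + ε := by have := hw0 i; positivity
    have h1 := Real.sq_sqrt (ha0 i)
    have h2 := Real.sq_sqrt (hm i).le
    have h3 := Real.sq_sqrt (hν0 i)
    have h4 := Real.sqrt_pos.2 (hm i)
    generalize w i + ε = d at hd ⊢
    generalize √(1 + c * a i) = q at h2 h4 ⊢
    generalize √(ν i) = n at h3 ⊢
    generalize √(a i) = p at h1 ⊢
    rw [← h2, ← h3, ← h1]
    have : p ^ 2 - 2 * (p * q⁻¹ * n) + 1 / q ^ 2 * n ^ 2 + 1 / d * n ^ 2 -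
        p ^ 2 * q ^ 2 / (q ^ 2 + d) = (p * d * q - n * (q ^ 2 + d)) ^ 2 /
          ((q ^ 2 + d) * q ^ 2 * d) := by
      field_simp
      ring
    have h5 : 0 ≤ (p * d * q - n * (q ^ 2 + d)) ^ 2 / ((q ^ 2 + d) * q ^ 2 * d) := by positivity
    linarith
  rw [htr, Complex.add_re, ht1, ht2, j1, j2]
  linarith

theorem exists_waterfilling {s : ℕ} (a b : ℕ → ℝ) (ha : Antitone a) (ha0 : ∀ i, 0 ≤ a i)
    (hb : Antitone b) (hb0 : ∀ i, 0 ≤ b i) {c P : ℝ} (hc : 0 < c) (hP : 0 < P) :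
    ∃ x : ℕ → ℝ, Antitone x ∧ (∀ i, 0 ≤ x i) ∧ (∀ i, b i = 0 → x i = 0) ∧
      ∑ i : Fin s, (1 + c * a i) * (x i / b i) ≤ P ∧
      ∀ y : Fin s → ℝ, (∀ i, 0 ≤ y i) → (∀ i : Fin s, b i = 0 → y i = 0) →
        ∑ i : Fin s, (1 + c * a i) * (y i / b i) ≤ P →
        ∑ i : Fin s, a i / (1 + x i) ≤ ∑ i : Fin s, a i / (1 + y i) := by
  have hm : ∀ i, 0 < 1 + c * a i := fun i => by have := ha0 i; positivity
  set κ : ℕ → ℝ := fun i => √(b i * (a i / (1 + c * a i))) with hκ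
  have hκ0 : ∀ i, 0 ≤ κ i := fun i => Real.sqrt_nonneg _
  have hκsq : ∀ i, κ i ^ 2 = b i * (a i / (1 + c * a i)) := fun i =>
    Real.sq_sqrt (mul_nonneg (hb0 i) (div_nonneg (ha0 i) (hm i).le))
  have hκanti : Antitone κ := by
    intro i j hij
    apply Real.sqrt_le_sqrt
    have h1 := ha hij
    have h2 : a j / (1 + c * a j) ≤ a i / (1 + c * a i) := by
      rw [div_le_div_iff₀ (hm j) (hm i)]
      nlinarith
    exact mul_le_mul (hb hij) h2 (div_nonneg (ha0 j) (hm j).le) (hb0 i)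
  by_cases hall : ∀ i : Fin s, κ i = 0
  · refine ⟨fun _ => 0, fun _ _ _ => le_rfl, fun _ => le_rfl, fun _ _ => rfl, by simpa using hP.le,
      fun y _ hyb _ => Finset.sum_le_sum fun i _ => ?_⟩
    have h := hκsq i
    rw [hall i] at h
    by_cases hbi : b i = 0
    · rw [hyb i hbi]
    · have : a i = 0 := by
        have h' : b i * (a i / (1 + c * a i)) = 0 := by rw [← h]; norm_num
        rcases mul_eq_zero.1 h' with h'' | h''
        · exact absurd h'' hbi
        · exact (div_eq_zero_iff.1 h'').resolve_right (hm i).ne'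
      simp [this]
  push Not at hall
  obtain ⟨i₀, hi₀⟩ := hall
  have hκpos : 0 < κ i₀ := lt_of_le_of_ne (hκ0 _) (Ne.symm hi₀)
  have hbpos : 0 < b i₀ := by
    refine lt_of_le_of_ne (hb0 _) fun h => ?_
    have := hκsq i₀
    rw [← h, zero_mul] at this
    exact hi₀ (pow_eq_zero_iff (two_ne_zero) |>.1 this)
  set p : ℝ → ℝ := fun θ => ∑ i : Fin s, (1 + c * a i) * (max 0 (θ * κ i - 1) / b i) with hp
  have hpcont : Continuous p := by
    rw [hp]
    fun_prop
  have hp0 : p 0 = 0 := by simp [hp]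
  set θ₁ := (1 + P * b i₀ / (1 + c * a i₀)) / κ i₀ with hθ₁
  have hθ₁0 : 0 ≤ θ₁ := by
    have := hm i₀
    positivity
  have hp1 : P ≤ p θ₁ := by
    have h1 : (1 + c * a i₀) * (max 0 (θ₁ * κ i₀ - 1) / b i₀) ≤ p θ₁ :=
      Finset.single_le_sum
        (f := fun i : Fin s => (1 + c * a i) * (max 0 (θ₁ * κ i - 1) / b i))
        (fun i _ => mul_nonneg (hm i).le (div_nonneg (le_max_left _ _) (hb0 i)))
        (Finset.mem_univ i₀)
    have h2 : (1 + c * a i₀) * ((θ₁ * κ i₀ - 1) / b i₀) = P := by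
      have := (hm i₀).ne'
      rw [hθ₁]
      field_simp
      ring
    have h3 : (1 + c * a i₀) * ((θ₁ * κ i₀ - 1) / b i₀) ≤
        (1 + c * a i₀) * (max 0 (θ₁ * κ i₀ - 1) / b i₀) := by
      have := hm i₀
      gcongr
      exact le_max_right _ _
    linarith
  obtain ⟨θ, ⟨hθ0, -⟩, hθ⟩ := intermediate_value_Icc hθ₁0 hpcont.continuousOn
    (show P ∈ Set.Icc (p 0) (p θ₁) from ⟨by rw [hp0]; exact hP.le, hp1⟩)
  have hθpos : 0 < θ := by
    refine lt_of_le_of_ne hθ0 fun h => ?_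
    rw [← h, hp0] at hθ
    exact hP.ne hθ
  refine ⟨fun i => max 0 (θ * κ i - 1), ?_, fun i => le_max_left _ _, ?_, hθ.le, ?_⟩
  · intro i j hij
    have := hκanti hij
    dsimp only
    gcongr
  · intro i hi
    have : κ i = 0 := by simp [hκ, hi]
    simp [this]
  · intro y hy0 hyb hyP
    have tangent : ∀ i : Fin s, a i / (1 + max 0 (θ * κ i - 1)) -
        (θ ^ 2)⁻¹ * ((1 + c * a i) * (y i / b i) -
          (1 + c * a i) * (max 0 (θ * κ i - 1) / b i)) ≤ a i / (1 + y i) := by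
      intro i
      have hyi := hy0 i
      have hmi := hm i
      have hai := ha0 i
      by_cases hbi : b i = 0
      · rw [hbi, hyb i hbi]
        have : κ i = 0 := by simp [hκ, hbi]
        simp [this]
      have hbi' : 0 < b i := lt_of_le_of_ne (hb0 i) (Ne.symm hbi)
      have hk := hκsq i
      have hai' : a i = κ i ^ 2 * (1 + c * a i) / b i := by
        rw [hk]
        field_simp
      set m := 1 + c * a i
      set k := κ i with hkdef
      have hk0 : 0 ≤ k := hκ0 i
      set y' := y i
      rw [hai']
      rcases le_total (θ * k) 1 with hle | hge
      · rw [max_eq_left (by linarith)]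
        have : k ^ 2 * m / b i / (1 + y') - (k ^ 2 * m / b i / (1 + 0) -
            (θ ^ 2)⁻¹ * (m * (y' / b i) - m * (0 / b i))) =
            m * y' * ((1 - (θ * k) ^ 2) + y') / (b i * θ ^ 2 * (1 + y')) := by
          field_simp
          ring
        have h1 : (θ * k) ^ 2 ≤ 1 := pow_le_one₀ (by positivity) hle
        have h2 : 0 ≤ m * y' * ((1 - (θ * k) ^ 2) + y') / (b i * θ ^ 2 * (1 + y')) := by
          have : 0 ≤ 1 - (θ * k) ^ 2 := by linarith
          positivity
        linarith
      · rw [max_eq_right (by linarith)]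
        have hkpos : 0 < k := by
          by_contra h
          have : k = 0 := le_antisymm (not_lt.1 h) hk0
          rw [this] at hge
          linarith
        have : k ^ 2 * m / b i / (1 + y') - (k ^ 2 * m / b i / (1 + (θ * k - 1)) -
            (θ ^ 2)⁻¹ * (m * (y' / b i) - m * ((θ * k - 1) / b i))) =
            m * (1 + y' - θ * k) ^ 2 / (b i * θ ^ 2 * (1 + y')) := by
          have : 1 + (θ * k - 1) = θ * k := by ring
          rw [this]
          field_simp
          ring
        have h2 : 0 ≤ m * (1 + y' - θ * k) ^ 2 / (b i * θ ^ 2 * (1 + y')) := by positivity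
        linarith
    have hsum := Finset.sum_le_sum fun (i : Fin s) (_ : i ∈ Finset.univ) => tangent i
    rw [Finset.sum_sub_distrib, ← Finset.mul_sum, Finset.sum_sub_distrib] at hsum
    have hθ' : ∑ i : Fin s, (1 + c * a i) * (max 0 (θ * κ i - 1) / b i) = P := hθ
    rw [hθ'] at hsum
    have : (θ ^ 2)⁻¹ * (∑ i : Fin s, (1 + c * a i) * (y i / b i) - P) ≤ 0 :=
      mul_nonpos_of_nonneg_of_nonpos (by positivity) (by linarith)
    linarith

theorem exists_diagonal_lower_bound {u s : ℕ} (a b : ℕ → ℝ) (ha : Antitone a)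
    (ha0 : ∀ i, 0 ≤ a i) (hb : Antitone b) (hb0 : ∀ i, 0 ≤ b i) {c P : ℝ} (hc : 0 < c)
    (X : Matrix (Fin u) (Fin s) ℂ) (hX : ∑ k, ∑ j : Fin s, (1 + c * a j) * ‖X k j‖ ^ 2 ≤ P)
    (G : Matrix (Fin s) (Fin s) ℂ)
    (hG : G * (1 + Xᴴ * diagonal (fun i : Fin u => (b i : ℂ)) * X) = 1) (hGH : Gᴴ = G) :
    ∃ y : Fin s → ℝ, (∀ i, 0 ≤ y i) ∧ (∀ i : Fin s, b i = 0 → y i = 0) ∧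
      ∑ i : Fin s, (1 + c * a i) * (y i / b i) ≤ P ∧
      ∑ i : Fin s, a i / (1 + y i) ≤
        ((diagonal (fun i : Fin s => (a i : ℂ)) * G).trace).re := by
  have hm : ∀ i, 0 < 1 + c * a i := fun i => by have := ha0 i; positivity
  set Rm : Matrix (Fin s) (Fin s) ℂ :=
    diagonal (fun i : Fin s => ((√(1 + c * a i) : ℝ) : ℂ)) with hRm
  have hRmH : Rmᴴ = Rm := by
    rw [hRm, diagonal_conjTranspose]
    congr 1
    ext i
    simp
  have hBpsd : (diagonal (fun i : Fin u => (b i : ℂ))).PosSemidef :=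
    PosSemidef.diagonal fun i => by simpa using hb0 i
  obtain ⟨Q, w, hQ1, hQ2, hw, hw0, -, hW, -⟩ :=
    exists_sorted_spectral_decomposition (hBpsd.conjTranspose_mul_mul_same (X * Rm))
  have hW' : Rm * (Xᴴ * diagonal (fun i : Fin u => (b i : ℂ)) * X) * Rm =
      Q * diagonal (fun i : Fin s => (w i : ℂ)) * Qᴴ := by
    rw [← hW, conjTranspose_mul, hRmH]
    simp only [Matrix.mul_assoc]
  have hpow : ∀ ε > 0, ∑ j : Fin s, w j / (b j + ε) ≤ P := by
    intro ε hε
    refine (sum_div_le_sum_norm_sq b w hb hb0 hw hw0 (X * Rm) Q hQ1 hQ2 hW hε).trans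
      (le_trans (le_of_eq ?_) hX)
    refine Finset.sum_congr rfl fun k _ => Finset.sum_congr rfl fun j _ => ?_
    rw [hRm, mul_diagonal, norm_mul, mul_pow, Complex.norm_real, Real.norm_eq_abs, sq_abs,
      Real.sq_sqrt (hm j).le, mul_comm]
  have hobj := fun (ε : ℝ) (hε : 0 < ε) =>
    sum_div_le_re_trace a w ha ha0 hw hw0 hc _ G Q hG hGH hQ1 hQ2 hW' hε
  have hwb : ∀ i : Fin s, b i = 0 → w i = 0 := by
    intro i hi
    by_contra hne
    have hwi : 0 < w i := lt_of_le_of_ne (hw0 i) (Ne.symm hne)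
    have hP0 : 0 ≤ P := (Finset.sum_nonneg fun k _ => Finset.sum_nonneg fun j _ =>
      mul_nonneg (hm _).le (by positivity)).trans hX
    have hε : 0 < w i / (P + 1) := by positivity
    have h1 := (Finset.single_le_sum (f := fun j : Fin s => w j / (b j + w i / (P + 1)))
      (fun j _ => div_nonneg (hw0 j) (add_nonneg (hb0 j) hε.le)) (Finset.mem_univ i)).trans
        (hpow _ hε)
    have h2 : w i / (b i + w i / (P + 1)) = P + 1 := by
      rw [hi, zero_add]
      field_simp
    rw [h2] at h1
    linarith
  have hpos : ∀ᶠ ε : ℝ in nhdsWithin 0 (Set.Ioi 0), 0 < ε := self_mem_nhdsWithin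
  refine ⟨fun i => w i / (1 + c * a i), fun i => div_nonneg (hw0 i) (hm i).le, fun i hi => by
    simp [hwb i hi], ?_, ?_⟩
  · have hlim : Filter.Tendsto (fun ε : ℝ => ∑ j : Fin s, w j / (b j + ε))
        (nhdsWithin 0 (Set.Ioi 0)) (nhds (∑ j : Fin s, w j / b j)) := by
      refine tendsto_finsetSum _ fun j _ => ?_
      by_cases hbj : b j = 0
      · simp [hwb j hbj]
      · have : ContinuousAt (fun ε : ℝ => w j / (b j + ε)) 0 := by
          refine ContinuousAt.div (by fun_prop) (by fun_prop) (by simpa using hbj)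
        have h := this.tendsto
        rw [add_zero] at h
        exact h.mono_left nhdsWithin_le_nhds
    have h := le_of_tendsto hlim (hpos.mono hpow)
    refine le_trans (le_of_eq (Finset.sum_congr rfl fun i _ => ?_)) h
    have := (hm i).ne'
    field_simp
  · have hlim : Filter.Tendsto
        (fun ε : ℝ => ∑ j : Fin s, a j * (1 + c * a j) / (1 + c * a j + (w j + ε)))
        (nhdsWithin 0 (Set.Ioi 0))
        (nhds (∑ j : Fin s, a j * (1 + c * a j) / (1 + c * a j + w j))) := by
      refine tendsto_finsetSum _ fun j _ => ?_
      have : ContinuousAt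
          (fun ε : ℝ => a j * (1 + c * a j) / (1 + c * a j + (w j + ε))) 0 := by
        refine ContinuousAt.div (by fun_prop) (by fun_prop) ?_
        have := hm j
        have := hw0 j
        positivity
      have h := this.tendsto
      rw [add_zero] at h
      exact h.mono_left nhdsWithin_le_nhds
    have h := le_of_tendsto hlim (hpos.mono hobj)
    refine le_trans (le_of_eq (Finset.sum_congr rfl fun i _ => ?_)) h
    have h1 := hm i
    have h2 := hw0 i
    have h3 : 0 < 1 + c * a i + w i := by positivity
    rw [one_add_div h1.ne', div_div_eq_mul_div]

theorem lt_card_support_iff_of_antitone {n : ℕ} (b : ℕ → ℝ) (hb : Antitone b)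
    (hb0 : ∀ i, 0 ≤ b i) {i : ℕ} (hi : i < n) :
    i < Fintype.card {j : Fin n // b j ≠ 0} ↔ b i ≠ 0 := by
  rw [Fintype.card_subtype]
  constructor
  · intro h h0
    have hsub : Finset.univ.filter (fun j : Fin n => b j ≠ 0) ⊆ Finset.Iio ⟨i, hi⟩ := by
      intro j hj
      rw [Finset.mem_filter] at hj
      rw [Finset.mem_Iio, Fin.lt_def]
      by_contra hle
      exact hj.2 (le_antisymm (h0 ▸ hb (not_lt.1 hle)) (hb0 j))
    have := Finset.card_le_card hsub
    rw [Fin.card_Iio] at this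
    dsimp only at this
    omega
  · intro h
    have hsub : Finset.Iic ⟨i, hi⟩ ⊆ Finset.univ.filter (fun j : Fin n => b j ≠ 0) := by
      intro j hj
      rw [Finset.mem_Iic, Fin.le_def] at hj
      rw [Finset.mem_filter]
      refine ⟨Finset.mem_univ _, fun hj0 => h (le_antisymm (hj0 ▸ hb hj) (hb0 i))⟩
    have := Finset.card_le_card hsub
    rw [Fin.card_Iic] at this
    dsimp only at this
    omega

theorem mulVec_col_of_eq {n : ℕ} {A U : Matrix (Fin n) (Fin n) ℂ} {d : ℕ → ℝ}
    (hU : Uᴴ * U = 1) (hA : A = U * diagonal (fun i : Fin n => (d i : ℂ)) * Uᴴ) (i : Fin n) :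
    A *ᵥ (fun p => U p i) = (d i : ℂ) • fun p => U p i := by
  have h : A * U = U * diagonal (fun i : Fin n => (d i : ℂ)) := by
    rw [hA, Matrix.mul_assoc, hU, Matrix.mul_one]
  ext p
  have := congrFun (congrFun h p) i
  rw [mul_diagonal] at this
  rw [Pi.smul_apply, smul_eq_mul, mul_comm, ← this]
  rfl

theorem trace_mul_mul_one_add_inv {u s : ℕ} {A U : Matrix (Fin s) (Fin s) ℂ}
    {B V : Matrix (Fin u) (Fin u) ℂ} {Da : Matrix (Fin s) (Fin s) ℂ}
    {Db : Matrix (Fin u) (Fin u) ℂ} (hU1 : Uᴴ * U = 1) (hU2 : U * Uᴴ = 1) (hV1 : Vᴴ * V = 1)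
    (hA : A = U * Da * Uᴴ) (hB : B = V * Db * Vᴴ) (X : Matrix (Fin u) (Fin s) ℂ)
    (G : Matrix (Fin s) (Fin s) ℂ) (hG : G * (1 + Xᴴ * Db * X) = 1) :
    (A * (1 + (V * X * Uᴴ)ᴴ * B * (V * X * Uᴴ))⁻¹).trace = (Da * G).trace := by
  have h1 : (V * X * Uᴴ)ᴴ * B * (V * X * Uᴴ) = U * (Xᴴ * Db * X) * Uᴴ := by
    calc _ = U * Xᴴ * (Vᴴ * V) * Db * (Vᴴ * V) * X * Uᴴ := by
          rw [hB, conjTranspose_mul, conjTranspose_mul, conjTranspose_conjTranspose]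
          simp only [Matrix.mul_assoc]
      _ = _ := by
          rw [hV1]
          simp only [Matrix.mul_assoc, Matrix.one_mul]
  have h2 : (1 + (V * X * Uᴴ)ᴴ * B * (V * X * Uᴴ))⁻¹ = U * G * Uᴴ := by
    apply inv_eq_left_inv
    calc U * G * Uᴴ * (1 + (V * X * Uᴴ)ᴴ * B * (V * X * Uᴴ))
        = U * G * Uᴴ + U * G * (Uᴴ * U) * (Xᴴ * Db * X) * Uᴴ := by
          rw [h1, Matrix.mul_add, Matrix.mul_one]
          simp only [Matrix.mul_assoc]
      _ = U * (G * (1 + Xᴴ * Db * X)) * Uᴴ := by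
          rw [hU1, Matrix.mul_one, Matrix.mul_add, Matrix.mul_one, Matrix.mul_add, Matrix.add_mul]
          simp only [Matrix.mul_assoc]
      _ = 1 := by rw [hG, Matrix.mul_one, hU2]
  rw [h2, hA]
  calc (U * Da * Uᴴ * (U * G * Uᴴ)).trace = (U * (Da * (Uᴴ * U) * G * Uᴴ)).trace := by
        simp only [Matrix.mul_assoc]
    _ = (Da * G * (Uᴴ * U)).trace := by
        rw [hU1, Matrix.mul_one, trace_mul_comm, Matrix.mul_assoc, hU1]
    _ = _ := by rw [hU1, Matrix.mul_one]

theorem trace_mul_one_add_smul_mul {u s : ℕ} {A U : Matrix (Fin s) (Fin s) ℂ}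
    {V : Matrix (Fin u) (Fin u) ℂ} {a : ℕ → ℝ} (c : ℝ) (hU1 : Uᴴ * U = 1)
    (hV1 : Vᴴ * V = 1) (hA : A = U * diagonal (fun i : Fin s => (a i : ℂ)) * Uᴴ)
    (X : Matrix (Fin u) (Fin s) ℂ) :
    (V * X * Uᴴ * (1 + (c : ℂ) • A) * (V * X * Uᴴ)ᴴ).trace =
      ((∑ k, ∑ j : Fin s, (1 + c * a j) * ‖X k j‖ ^ 2 : ℝ) : ℂ) := by
  have h1 : Uᴴ * (1 + (c : ℂ) • A) * U =
      diagonal (fun i : Fin s => ((1 + c * a i : ℝ) : ℂ)) := by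
    have : Uᴴ * A * U = diagonal (fun i : Fin s => (a i : ℂ)) := by
      rw [hA]
      simp only [Matrix.mul_assoc]
      rw [hU1, Matrix.mul_one, ← Matrix.mul_assoc, hU1, Matrix.one_mul]
    rw [Matrix.mul_add, Matrix.add_mul, Matrix.mul_one, hU1, Matrix.mul_smul, Matrix.smul_mul,
      this, ← diagonal_one, ← diagonal_smul, diagonal_add]
    congr 1
    ext i
    simp
  have h2 : (V * X * Uᴴ * (1 + (c : ℂ) • A) * (V * X * Uᴴ)ᴴ).trace =
      (X * diagonal (fun i : Fin s => ((1 + c * a i : ℝ) : ℂ)) * Xᴴ).trace := by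
    rw [← h1, conjTranspose_mul, conjTranspose_mul, conjTranspose_conjTranspose]
    calc _ = (V * (X * (Uᴴ * (1 + (c : ℂ) • A) * U) * Xᴴ * Vᴴ)).trace := by
          simp only [Matrix.mul_assoc]
      _ = _ := by rw [trace_mul_comm, Matrix.mul_assoc, hV1, Matrix.mul_one]
  rw [h2, trace]
  push_cast
  refine Finset.sum_congr rfl fun k _ => ?_
  have := mul_diagonal_mul_conjTranspose_apply X (fun i : Fin s => 1 + c * a i) k
  push_cast at this ⊢
  rw [diag_apply, this]

theorem ofReal_re_trace_mul_of_isHermitian {n : Type*} [Fintype n] {A G : Matrix n n ℂ}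
    (hA : Aᴴ = A) (hG : Gᴴ = G) : (((A * G).trace.re : ℝ) : ℂ) = (A * G).trace := by
  rw [← Complex.conj_eq_iff_re, ← RCLike.star_def, ← trace_conjTranspose, conjTranspose_mul, hA,
    hG, trace_mul_comm]

theorem stmt_18 (t s r u : ℕ)
    (H₁ : Matrix (Fin s) (Fin t) ℂ) (H₂ : Matrix (Fin r) (Fin u) ℂ)
    (c P₂ : ℝ) (hc : 0 < c) (hP₂ : 0 < P₂)
    (S : Set (Matrix (Fin u) (Fin s) ℂ))
    (hS : S = {X | (X * (1 + (c : ℂ) • (H₁ * H₁ᴴ)) * Xᴴ).trace ≤ (P₂ : ℂ)})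
    (T : Matrix (Fin u) (Fin s) ℂ → ℂ)
    (hT : T = fun X => (H₁ * H₁ᴴ * (1 + Xᴴ * H₂ᴴ * H₂ * X)⁻¹).trace)
    (ρ : ℕ) (hρ : ρ = min s H₂.rank) :
    ∃ (Xstar : Matrix (Fin u) (Fin s) ℂ) (x μ ν : Fin ρ → ℝ)
      (v : Fin ρ → (Fin u → ℂ)) (w : Fin ρ → (Fin s → ℂ)),
      Xstar ∈ S ∧ (∀ X ∈ S, T Xstar ≤ T X) ∧
      Xstar = ∑ i, (Real.sqrt (x i / μ i) : ℂ) • vecMulVec (v i) (star (w i)) ∧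
      Antitone x ∧ (∀ i, 0 ≤ x i) ∧
      (∀ i j, star (v i) ⬝ᵥ v j = if i = j then 1 else 0) ∧
      (∀ i j, star (w i) ⬝ᵥ w j = if i = j then 1 else 0) ∧
      (∀ i, (H₂ᴴ * H₂).mulVec (v i) = (μ i : ℂ) • v i) ∧
      Antitone μ ∧ (∀ i, 0 < μ i) ∧
      (∃ (hB : (H₂ᴴ * H₂).IsHermitian) (d : Fin u → ℝ) (σ : Equiv.Perm (Fin u)),
        Antitone d ∧ d = hB.eigenvalues ∘ σ ∧
        ∀ (i : Fin ρ) (hi : (i : ℕ) < u), μ i = d ⟨i, hi⟩) ∧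
      (∀ i, (H₁ * H₁ᴴ).mulVec (w i) = (ν i : ℂ) • w i) ∧ Antitone ν ∧
      (∃ (hAh : (H₁ * H₁ᴴ).IsHermitian) (dA : Fin s → ℝ) (σ : Equiv.Perm (Fin s)),
        Antitone dA ∧ dA = hAh.eigenvalues ∘ σ ∧
        ∀ (i : Fin ρ) (hi : (i : ℕ) < s), ν i = dA ⟨i, hi⟩) := by
  have hApsd := posSemidef_self_mul_conjTranspose H₁
  have hBpsd := posSemidef_conjTranspose_mul_self H₂
  obtain ⟨U, a, hU1, hU2, ha, ha0, -, hA, hAh, σA, hσA⟩ :=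
    exists_sorted_spectral_decomposition hApsd
  obtain ⟨V, b, hV1, hV2, hb, hb0, hbu, hB, hBh, σB, hσB⟩ :=
    exists_sorted_spectral_decomposition hBpsd
  obtain ⟨x, hx, hx0, hxb, hxP, hxmin⟩ := exists_waterfilling (s := s) a b ha ha0 hb hb0 hc hP₂
  have hrank : H₂.rank = Fintype.card {j : Fin u // b j ≠ 0} := by
    rw [← rank_conjTranspose_mul_self, hBh.rank_eq_card_non_zero_eigs]
    refine Fintype.card_congr (Equiv.subtypeEquiv σB.symm fun j => ?_)
    have := congrFun hσB (σB.symm j)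
    simp only [Function.comp_apply, Equiv.apply_symm_apply] at this
    rw [this]
  have hru : H₂.rank ≤ u := by simpa using H₂.rank_le_width
  have hρs : ρ ≤ s := by omega
  have hρu : ρ ≤ u := by omega
  have hbρ : ∀ i < ρ, 0 < b i := fun i hi => lt_of_le_of_ne (hb0 i) (Ne.symm
    ((lt_card_support_iff_of_antitone b hb hb0 (by omega : i < u)).1 (by omega)))
  have hρb : ∀ i < s, ρ ≤ i → b i = 0 := by
    intro i his hi
    by_contra hne
    have hiu : i < u := by
      by_contra h
      exact hne (hbu i (not_lt.1 h))
    have := (lt_card_support_iff_of_antitone b hb hb0 hiu).2 hne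
    omega
  set Db : Matrix (Fin u) (Fin u) ℂ := diagonal (fun i : Fin u => (b i : ℂ)) with hDb
  set Da : Matrix (Fin s) (Fin s) ℂ := diagonal (fun i : Fin s => (a i : ℂ)) with hDa
  set D : Matrix (Fin u) (Fin s) ℂ :=
    of fun k j => if (k : ℕ) = j then ((√(x j / b j) : ℝ) : ℂ) else 0 with hD
  have hDapply : ∀ k j, D k j = if (k : ℕ) = j then ((√(x j / b j) : ℝ) : ℂ) else 0 :=
    fun _ _ => rfl
  have hsum : V * D * Uᴴ = ∑ i : Fin ρ, (Real.sqrt (x i / b i) : ℂ) •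
      vecMulVec (fun p => V p (Fin.castLE hρu i)) (star fun q => U q (Fin.castLE hρs i)) := by
    ext p q
    rw [mul_apply, Matrix.sum_apply]
    refine (Fintype.sum_of_injective (Fin.castLE hρs) (Fin.castLE_injective hρs) _ _ ?_ ?_).symm
    · intro j hj
      have hjρ : ρ ≤ (j : ℕ) := by
        by_contra h
        exact hj ⟨⟨j, not_le.1 h⟩, rfl⟩
      have hbj := hρb j j.2 hjρ
      have : (V * D) p j = 0 := by
        rw [mul_apply]
        refine Finset.sum_eq_zero fun k _ => ?_
        rw [hDapply, hbj]
        simp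
      rw [this, zero_mul]
    · intro i
      have : (V * D) p (Fin.castLE hρs i) =
          V p (Fin.castLE hρu i) * ((√(x i / b i) : ℝ) : ℂ) := by
        rw [mul_apply, Finset.sum_eq_single (Fin.castLE hρu i)]
        · have h : D (Fin.castLE hρu i) (Fin.castLE hρs i) = ((√(x i / b i) : ℝ) : ℂ) :=
            (hDapply _ _).trans (if_pos rfl)
          rw [h]
        · intro k _ hk
          have h : D k (Fin.castLE hρs i) = 0 :=
            (hDapply _ _).trans (if_neg fun h => hk (Fin.ext h))
          rw [h, mul_zero]
        · exact fun h => absurd (Finset.mem_univ _) h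
      rw [this, Matrix.smul_apply, vecMulVec_apply, conjTranspose_apply, smul_eq_mul,
        Pi.star_apply]
      ring
  have hcast : ∀ (j : Fin s), (j : ℕ) < u ∨ x j = 0 := by
    intro j
    rcases lt_or_ge (j : ℕ) u with h | h
    · exact Or.inl h
    · exact Or.inr (hxb j (hbu j h))
  have hDD : Dᴴ * Db * D = diagonal (fun j : Fin s => (x j : ℂ)) := by
    ext j j'
    rw [mul_apply]
    have hterm : ∀ k, (Dᴴ * Db) j k * D k j' = if (k : ℕ) = j then (if j = j' then
        (x j : ℂ) else 0) else 0 := by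
      intro k
      rw [hDb, mul_diagonal, conjTranspose_apply, hDapply, hDapply]
      by_cases h1 : (k : ℕ) = j
      · by_cases h2 : j = j'
        · subst h2
          rw [if_pos h1, if_pos h1, if_pos rfl, RCLike.star_def, Complex.conj_ofReal, h1,
            ← Complex.ofReal_mul, ← Complex.ofReal_mul, mul_right_comm,
            Real.mul_self_sqrt (div_nonneg (hx0 j) (hb0 j))]
          by_cases hbj : b j = 0
          · simp [hbj, hxb j hbj]
          · rw [div_mul_cancel₀ _ hbj]
        · rw [if_pos h1, if_pos h1, if_neg h2, if_neg (fun h => h2 (Fin.ext (h1.symm.trans h))),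
            mul_zero]
      · rw [if_neg h1, if_neg h1, star_zero, zero_mul, zero_mul]
    rw [Finset.sum_congr rfl fun k _ => hterm k, diagonal_apply]
    rcases hcast j with h | h
    · rw [Finset.sum_eq_single (⟨j, h⟩ : Fin u)]
      · rw [if_pos rfl]
      · intro k _ hk
        rw [if_neg fun h' => hk (Fin.ext h')]
      · exact fun h => absurd (Finset.mem_univ _) h
    · simp [h]
  have hpowD : ∑ k, ∑ j : Fin s, (1 + c * a j) * ‖D k j‖ ^ 2 ≤ P₂ := by
    refine le_trans ?_ hxP
    rw [Finset.sum_comm]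
    refine Finset.sum_le_sum fun j _ => ?_
    have hmj : 0 ≤ 1 + c * a j := by have := ha0 j; positivity
    have hterm : ∀ k : Fin u, (1 + c * a j) * ‖D k j‖ ^ 2 =
        if (k : ℕ) = j then (1 + c * a j) * (x j / b j) else 0 := by
      intro k
      rw [hDapply]
      split_ifs
      · rw [Complex.norm_real, Real.norm_eq_abs, sq_abs,
          Real.sq_sqrt (div_nonneg (hx0 j) (hb0 j))]
      · simp
    rw [Finset.sum_congr rfl fun k _ => hterm k]
    rcases hcast j with h | h
    · rw [Finset.sum_eq_single (⟨j, h⟩ : Fin u)]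
      · rw [if_pos rfl]
      · intro k _ hk
        rw [if_neg fun h' => hk (Fin.ext h')]
      · exact fun h => absurd (Finset.mem_univ _) h
    · simp [h]
  have hTD : T (V * D * Uᴴ) = ((∑ i : Fin s, a i / (1 + x i) : ℝ) : ℂ) := by
    have hG : diagonal (fun i : Fin s => (((1 + x i)⁻¹ : ℝ) : ℂ)) * (1 + Dᴴ * Db * D) = 1 := by
      rw [hDD, ← diagonal_one, diagonal_add, diagonal_mul_diagonal]
      congr 1
      ext i
      have : (1 + x i : ℝ) ≠ 0 := by have := hx0 i; positivity
      rw [← Complex.ofReal_one, ← Complex.ofReal_add, ← Complex.ofReal_mul, inv_mul_cancel₀ this]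
    have h := trace_mul_mul_one_add_inv hU1 hU2 hV1 hA hB D _ hG
    rw [hT]
    dsimp only
    rw [Matrix.mul_assoc (V * D * Uᴴ)ᴴ, h, hDa, diagonal_mul_diagonal, trace_diagonal]
    push_cast
    rfl
  refine ⟨V * D * Uᴴ, fun i => x i, fun i => b i, fun i => a i,
    fun i p => V p (Fin.castLE hρu i), fun i q => U q (Fin.castLE hρs i), ?_, ?_, hsum,
    fun i j hij => hx hij, fun i => hx0 i, ?_, ?_,
    fun i => mulVec_col_of_eq hV1 hB (Fin.castLE hρu i), fun i j hij => hb hij,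
    fun i => hbρ i i.2, ⟨hBh, fun i => b i, σB, fun i j hij => hb hij, hσB, fun _ _ => rfl⟩,
    fun i => mulVec_col_of_eq hU1 hA (Fin.castLE hρs i), fun i j hij => ha hij,
    ⟨hAh, fun i => a i, σA, fun i j hij => ha hij, hσA, fun _ _ => rfl⟩⟩
  · rw [hS, Set.mem_ofPred_eq, trace_mul_one_add_smul_mul c hU1 hV1 hA]
    exact Complex.real_le_real.2 hpowD
  · intro X hX
    set Z := Vᴴ * X * U with hZ
    have hXZ : X = V * Z * Uᴴ := by
      calc X = (V * Vᴴ) * X * (U * Uᴴ) := by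
            rw [hU2, hV2, Matrix.one_mul, Matrix.mul_one]
        _ = _ := by
            rw [hZ]
            simp only [Matrix.mul_assoc]
    have hDbpsd : Db.PosSemidef := PosSemidef.diagonal fun i => by simpa using hb0 i
    have hYpd : (1 + Zᴴ * Db * Z).PosDef :=
      PosDef.one.add_posSemidef (hDbpsd.conjTranspose_mul_mul_same Z)
    have hG : (1 + Zᴴ * Db * Z)⁻¹ * (1 + Zᴴ * Db * Z) = 1 :=
      nonsing_inv_mul _ ((isUnit_iff_isUnit_det _).1 hYpd.isUnit)
    have hGH : ((1 + Zᴴ * Db * Z)⁻¹)ᴴ = (1 + Zᴴ * Db * Z)⁻¹ := hYpd.isHermitian.inv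
    have hpow : ∑ k, ∑ j : Fin s, (1 + c * a j) * ‖Z k j‖ ^ 2 ≤ P₂ := by
      rw [hS, Set.mem_ofPred_eq, hXZ, trace_mul_one_add_smul_mul c hU1 hV1 hA] at hX
      exact Complex.real_le_real.1 hX
    obtain ⟨y, hy0, hyb, hyP, hyT⟩ :=
      exists_diagonal_lower_bound a b ha ha0 hb hb0 hc Z hpow _ hG hGH
    have hDaH : Daᴴ = Da := by
      rw [hDa, diagonal_conjTranspose]
      congr 1
      ext i
      simp
    have hTX : T X = (((Da * (1 + Zᴴ * Db * Z)⁻¹).trace.re : ℝ) : ℂ) := by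
      rw [ofReal_re_trace_mul_of_isHermitian hDaH hGH, hT]
      dsimp only
      rw [hXZ, Matrix.mul_assoc (V * Z * Uᴴ)ᴴ]
      exact trace_mul_mul_one_add_inv hU1 hU2 hV1 hA hB Z _ hG
    rw [hTD, hTX]
    exact Complex.real_le_real.2 ((hxmin y hy0 hyb hyP).trans hyT)
  · intro i j
    have := congrFun (congrFun hV1 (Fin.castLE hρu i)) (Fin.castLE hρu j)
    rw [one_apply] at this
    simpa [mul_apply, dotProduct] using this
  · intro i j
    have := congrFun (congrFun hU1 (Fin.castLE hρs i)) (Fin.castLE hρs j)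
    rw [one_apply] at this
    simpa [mul_apply, dotProduct] using this
end
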